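/- Let k ≥ 3, 1 ≤ ℓ ≤ k−1, a ≥ 1, 0 ≤ x ≤ k be integers, set b = 2x + ℓ + (k−ℓ)a, and suppose 0 < ε ≤ ℓ/(3a) and 1/n ≪ 1/C ≪ β, 1/b. Let V be an n-vertex set, and let ℱ₁, …, ℱ_t be t ≤ n^{2k} families, each consisting of 24β·n^b ordered b-subsets of V. Suppose G = 𝔾^{(k)}(n,p) on V with p ≥ n^{−(k−ℓ)−ε} if ℓ ≥ 2 and p ≥ C·n^{−(k−1)} if ℓ = 1. Then a.a.s. there exists a family ℱ ⊆ ⋃_{i∈[t]} ℱ_i of at most βn pairwise disjoint ordered b-sets such that |ℱ_i ∩ ℱ| ≥ β²n/b² for each i ∈ [t], and every member of ℱ spans a labeled copy of P_{a,x} in G. -/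

import Mathlib

open Finset
open scoped Classical

/-- All `k`-subsets of `Fin n` (the possible edges of a `k`-graph on `n` vertices). -/
def kSets (n k : ℕ) : Finset (Finset (Fin n)) := Finset.univ.powersetCard k

/-- The probability that the binomial random `k`-graph `G^{(k)}(n,p)` (each `k`-set is an
edge independently with probability `p`) has an edge set satisfying the property `A`. -/
noncomputable def gProb (n k : ℕ) (p : ℝ) (A : Finset (Finset (Fin n)) → Prop) : ℝ :=
  ∑ E ∈ (kSets n k).powerset.filter (fun E => A E),
    p ^ E.card * (1 - p) ^ ((kSets n k).card - E.card)

/-- Expectation of a random variable `f` of the random `k`-graph `G^{(k)}(n,p)`. -/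
noncomputable def gExpect (n k : ℕ) (p : ℝ) (f : Finset (Finset (Fin n)) → ℝ) : ℝ :=
  ∑ E ∈ (kSets n k).powerset,
    p ^ E.card * (1 - p) ^ ((kSets n k).card - E.card) * f E

/-- The degree of a vertex set `S` in the `k`-graph with edge set `E`: the number of edges
containing `S` (equivalently, the number of `(k-|S|)`-sets `T` with `S ∪ T ∈ E`). -/
def degOf {n : ℕ} (E : Finset (Finset (Fin n))) (S : Finset (Fin n)) : ℕ :=
  (E.filter (fun e => S ⊆ e)).card

/-- The minimum vertex degree (minimum 1-degree) of a `k`-graph. -/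
noncomputable def minVertexDeg {n : ℕ} (E : Finset (Finset (Fin n))) : ℕ :=
  sInf {d : ℕ | ∃ v : Fin n, degOf E {v} = d}

/-- The index set of the `i`-th edge of the path `P_{a,x}`:
`{x + i*d, x + i*d + 1, …, x + i*d + k - 1}` (here `d = k - ℓ`). -/
def edgeIdx (k d x i : ℕ) : Finset ℕ := (Finset.range k).image (fun j => x + i * d + j)

/-- The ordered `b`-tuple `w` spans a labeled copy of `P_{a,x}` (the `k`-uniform `ℓ`-path
with `a` edges, preceded and followed by `x` isolated vertices) in the edge set `E`. -/
def SpansPax {n : ℕ} (k ℓ a x : ℕ) (E : Finset (Finset (Fin n))) {b : ℕ}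
    (w : Fin b → Fin n) : Prop :=
  Function.Injective w ∧
  ∀ i < a,
    ((Finset.univ.filter (fun m : Fin b => (m : ℕ) ∈ edgeIdx k (k - ℓ) x i)).image w) ∈ E

/-- The ordered tuple `w` spans a labeled copy of the `ℓ`-path `P_a` of length `a` in `E`. -/
def SpansPath {n : ℕ} (k ℓ a : ℕ) (E : Finset (Finset (Fin n))) {b : ℕ}
    (w : Fin b → Fin n) : Prop :=
  SpansPax k ℓ a 0 E w

/-- The first `ℓ`-end of the ordered tuple `w` (its first `ℓ` vertices, as a set). -/
def firstEnd {n b : ℕ} (ℓ : ℕ) (w : Fin b → Fin n) : Finset (Fin n) :=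
  (Finset.univ.filter (fun m : Fin b => (m : ℕ) < ℓ)).image w

/-- The last `ℓ`-end of the ordered tuple `w` (its last `ℓ` vertices, as a set). -/
def lastEnd {n b : ℕ} (ℓ : ℕ) (w : Fin b → Fin n) : Finset (Fin n) :=
  (Finset.univ.filter (fun m : Fin b => b - ℓ ≤ (m : ℕ))).image w

/-- The `k`-graph with edge set `E` on vertex set `Fin n` contains a Hamiltonian `ℓ`-cycle:
there is a cyclic ordering of all `n` vertices such that each of the `n/(k-ℓ)` edges
consists of `k` consecutive vertices, consecutive edges overlapping in `ℓ` vertices. -/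
def IsHamCycle (n k ℓ : ℕ) (E : Finset (Finset (Fin n))) : Prop :=
  ∃ f : ZMod n → Fin n, Function.Bijective f ∧
    ∀ i < n / (k - ℓ),
      ((Finset.range k).image (fun j => f (((i * (k - ℓ) + j : ℕ) : ZMod n)))) ∈ E

/-- The `ℓ`-shadow of a `k`-graph: all `ℓ`-sets contained in some edge. -/
def shadowL {n : ℕ} (ℓ : ℕ) (E : Finset (Finset (Fin n))) : Finset (Finset (Fin n)) :=
  (Finset.univ.powersetCard ℓ).filter (fun S => ∃ e ∈ E, S ⊆ e)

/-- The list `v` of vertices spans a copy of the `ℓ`-path `P_a` of length `a` in `E`. -/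
def ListSpans {n : ℕ} (k ℓ a : ℕ) (E : Finset (Finset (Fin n))) (v : List (Fin n)) : Prop :=
  v.Nodup ∧ v.length = a * (k - ℓ) + ℓ ∧
    ∀ i < a, ((v.drop (i * (k - ℓ))).take k).toFinset ∈ E

/-- `Φ_F(n,p) = min { n^{v_H} p^{e_H} : H ⊆ F, e_H > 0 }`, where the subgraph `H` is given
by a nonempty edge set `E' ⊆ F` together with a vertex set `W` containing all its edges. -/
noncomputable def Phi {V : Type*} (n : ℕ) (p : ℝ) (F : Finset (Finset V)) : ℝ :=
  sInf {r : ℝ | ∃ (W : Finset V) (E' : Finset (Finset V)),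
    E' ⊆ F ∧ E'.Nonempty ∧ (∀ e ∈ E', e ⊆ W) ∧ r = (n : ℝ) ^ W.card * p ^ E'.card}

/-- The ordered tuple `w` spans a labeled copy of the `k`-graph `F` (given by its edge set
`Fe` on vertex set `Fin s`) in the edge set `E`. -/
def SpansCopy {n s : ℕ} (Fe : Finset (Finset (Fin s))) (E : Finset (Finset (Fin n)))
    (w : Fin s → Fin n) : Prop :=
  ∀ e ∈ Fe, e.image w ∈ E

/-- Concatenation of three ordered tuples. -/
def concat3 {n p q r : ℕ} (A : Fin p → Fin n) (C : Fin q → Fin n) (B : Fin r → Fin n)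
    (m : Fin (p + q + r)) : Fin n :=
  if h : (m : ℕ) < p then A ⟨(m : ℕ), h⟩
  else if h2 : (m : ℕ) < p + q then C ⟨(m : ℕ) - p, by omega⟩
  else B ⟨(m : ℕ) - (p + q), by have := m.isLt; omega⟩

/-- `w`, spanning an `ℓ`-path of length `a`, is a `W`-absorber in `E`: it avoids `W`, and
its vertex set together with `W` spans an `ℓ`-path (of length `a+1` when `|W| = k - ℓ`)
with the same two `ℓ`-ends. -/
def IsAbsorber {n : ℕ} (k ℓ a : ℕ) (E : Finset (Finset (Fin n))) {b : ℕ}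
    (w : Fin b → Fin n) (W : Finset (Fin n)) : Prop :=
  (∀ m, w m ∉ W) ∧
  ∃ w' : Fin (b + W.card) → Fin n, SpansPath k ℓ (a + 1) E w' ∧
    Finset.image w' Finset.univ = Finset.image w Finset.univ ∪ W ∧
    firstEnd ℓ w' = firstEnd ℓ w ∧ lastEnd ℓ w' = lastEnd ℓ w


/-! A family `A` of ordered tuples contains about `|A| p ^ a` copies of `P_{a,x}`. Any `e ≥ 1` edges
of the path cover at least `(k - ℓ) e + ℓ` vertices, and `n ^ ((k - ℓ) e + ℓ) p ^ e ≥ C n`, so the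
correlation sum of these copies is at most a small multiple of `(n ^ b p ^ a) ^ 2 / n`. Janson's
inequality then bounds the lower tail by `exp (-2 n)`, which survives a union bound over all
the families `ℱ i` and over the families of tuples avoiding a given set of vertices at a given
position; Chebyshev's inequality bounds the total number of copies from above. Hence a.a.s. few
copies go through vertices of more than twice the average degree. Discard these and choose about
`β n / (2 b ^ 2)` of the remaining copies independently and uniformly at random: on average few
pairs of them meet, while the number of hits in each `ℱ i` is small only with exponentially small
probability. The chosen copies that meet no other one form the required family. -/

namespace RandomSubset

variable {α : Type*} {Ω : Finset α} {p : ℝ}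

/-- The probability that the `p`-random subset of `Ω`, which contains each element of `Ω`
independently with probability `p`, equals `R ⊆ Ω`. -/
noncomputable def weight (Ω : Finset α) (p : ℝ) (R : Finset α) : ℝ :=
  p ^ #R * (1 - p) ^ (#Ω - #R)

/-- Expectation with respect to the `p`-random subset of `Ω`, as a linear functional. -/
noncomputable def expect (Ω : Finset α) (p : ℝ) : (Finset α → ℝ) →ₗ[ℝ] ℝ :=
  ∑ R ∈ Ω.powerset, weight Ω p R • LinearMap.proj R

/-- The probability that the `p`-random subset of `Ω` has the property `A`. -/
noncomputable def prob (Ω : Finset α) (p : ℝ) (A : Finset α → Prop) : ℝ :=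
  expect Ω p fun R => if A R then 1 else 0

lemma weight_nonneg (hp : p ∈ Set.Icc 0 1) (R : Finset α) : 0 ≤ weight Ω p R :=
  mul_nonneg (pow_nonneg hp.1 _) (pow_nonneg (sub_nonneg.2 hp.2) _)

lemma expect_apply (f : Finset α → ℝ) : expect Ω p f = ∑ R ∈ Ω.powerset, weight Ω p R * f R := by
  simp only [expect, LinearMap.sum_apply, LinearMap.smul_apply, LinearMap.proj_apply, smul_eq_mul]

lemma expect_const (c : ℝ) : expect Ω p (fun _ => c) = c := by
  simp only [expect_apply, weight, ← sum_mul, sum_pow_mul_eq_add_pow, add_sub_cancel, one_pow,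
    one_mul]

lemma expect_const_mul (c : ℝ) (f : Finset α → ℝ) :
    expect Ω p (fun R => c * f R) = c * expect Ω p f :=
  map_smul (expect Ω p) c f

lemma expect_sub (f g : Finset α → ℝ) :
    expect Ω p (fun R => f R - g R) = expect Ω p f - expect Ω p g :=
  map_sub (expect Ω p) f g

lemma expect_sum {ι : Type*} (A : Finset ι) (f : ι → Finset α → ℝ) :
    expect Ω p (fun R => ∑ i ∈ A, f i R) = ∑ i ∈ A, expect Ω p (f i) := by
  rw [← map_sum, ← sum_fn]

lemma expect_congr {f g : Finset α → ℝ} (h : ∀ R ⊆ Ω, f R = g R) :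
    expect Ω p f = expect Ω p g := by
  simp only [expect_apply]
  exact sum_congr rfl fun R hR => by rw [h R (mem_powerset.1 hR)]

lemma expect_mono (hp : p ∈ Set.Icc 0 1) {f g : Finset α → ℝ} (h : f ≤ g) :
    expect Ω p f ≤ expect Ω p g := by
  simp only [expect_apply]
  exact sum_le_sum fun R _ => mul_le_mul_of_nonneg_left (h R) (weight_nonneg hp R)

lemma expect_nonneg (hp : p ∈ Set.Icc 0 1) {f : Finset α → ℝ} (h : 0 ≤ f) : 0 ≤ expect Ω p f :=
  (map_zero (expect Ω p)).ge.trans (expect_mono hp h)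

lemma hasDerivAt_expect {f f' : ℝ → Finset α → ℝ} {s : ℝ}
    (h : ∀ R, HasDerivAt (f · R) (f' s R) s) :
    HasDerivAt (fun s => expect Ω p (f s)) (expect Ω p (f' s)) s := by
  simp only [expect_apply]
  exact HasDerivAt.fun_sum fun R _ => (h R).const_mul _

lemma prob_mono (hp : p ∈ Set.Icc 0 1) {A B : Finset α → Prop} (h : ∀ R, A R → B R) :
    prob Ω p A ≤ prob Ω p B :=
  expect_mono hp fun R => by
    by_cases hA : A R
    · simp only [hA, h R hA, if_true, le_refl]
    · simp only [hA, if_false]; positivity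

lemma prob_le_expect (hp : p ∈ Set.Icc 0 1) {A : Finset α → Prop} {f : Finset α → ℝ}
    (hf : 0 ≤ f) (hA : ∀ R, A R → 1 ≤ f R) : prob Ω p A ≤ expect Ω p f :=
  expect_mono hp fun R => by
    by_cases h : A R
    · simpa only [h, if_true] using hA R h
    · simpa only [h, if_false] using! hf R

lemma prob_not (A : Finset α → Prop) : prob Ω p (fun R => ¬ A R) = 1 - prob Ω p A := by
  calc prob Ω p (fun R => ¬ A R) = expect Ω p (fun R => 1 - if A R then 1 else 0) :=
        expect_congr fun R _ => by by_cases h : A R <;> simp [h]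
    _ = 1 - prob Ω p A := by rw [expect_sub, expect_const, prob]

lemma prob_or_le (hp : p ∈ Set.Icc 0 1) (A B : Finset α → Prop) :
    prob Ω p (fun R => A R ∨ B R) ≤ prob Ω p A + prob Ω p B := by
  rw [prob, prob, prob, ← map_add]
  refine expect_mono hp fun R => ?_
  by_cases hA : A R <;> by_cases hB : B R <;> simp [hA, hB]

lemma prob_exists_le (hp : p ∈ Set.Icc 0 1) {ι : Type*} [Fintype ι] (A : ι → Finset α → Prop) :
    prob Ω p (fun R => ∃ i, A i R) ≤ ∑ i, prob Ω p (A i) := by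
  simp only [prob, ← expect_sum]
  refine prob_le_expect hp (fun R => sum_nonneg fun i _ => ?_) fun R ⟨i, hi⟩ => ?_
  · split_ifs <;> simp
  · simp only [sum_boole, Nat.one_le_cast, one_le_card]
    exact ⟨i, mem_filter_univ i |>.2 hi⟩

section DecidableEq

variable [DecidableEq α]

lemma expect_insert {e : α} (he : e ∉ Ω) (f : Finset α → ℝ) :
    expect (insert e Ω) p f =
      (1 - p) * expect Ω p f + p * expect Ω p (fun R => f (insert e R)) := by
  simp only [expect_apply, weight]
  rw [sum_powerset_insert he, mul_sum, mul_sum]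
  congr 1 <;> refine sum_congr rfl fun R hR => ?_
  · rw [card_insert_of_notMem he, Nat.succ_sub (card_le_card (mem_powerset.1 hR)), pow_succ]
    ring
  · rw [card_insert_of_notMem he, card_insert_of_notMem (notMem_mono (mem_powerset.1 hR) he),
      Nat.add_sub_add_right, pow_succ]
    ring

lemma expect_ite_mem {e : α} (he : e ∈ Ω) (f : Finset α → ℝ) :
    expect Ω p (fun R => if e ∈ R then f R else 0) = p * expect Ω p (fun R => f (insert e R)) := by
  have hne : e ∉ Ω.erase e := notMem_erase e Ω
  have hzero : expect (Ω.erase e) p (fun R => if e ∈ R then f R else 0) = 0 :=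
    (expect_congr fun R hR => if_neg (notMem_mono hR hne)).trans (expect_const 0)
  rw [← insert_erase he, expect_insert hne, expect_insert hne, hzero]
  simp only [mem_insert_self, if_true, insert_idem]
  ring

lemma expect_ite_subset {S : Finset α} (hS : S ⊆ Ω) (f : Finset α → ℝ) :
    expect Ω p (fun R => if S ⊆ R then f R else 0) =
      p ^ #S * expect Ω p (fun R => f (R ∪ S)) := by
  induction S using Finset.induction_on generalizing f with
  | empty => simp
  | insert e S he ih =>
    rw [insert_subset_iff] at hS
    calc expect Ω p (fun R => if insert e S ⊆ R then f R else 0)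
        = expect Ω p (fun R => if e ∈ R then (if S ⊆ R then f R else 0) else 0) := by
          simp only [insert_subset_iff, ite_and]
      _ = p * expect Ω p (fun R => if S ⊆ R then f (insert e R) else 0) := by
          simp only [expect_ite_mem hS.1, subset_insert_iff_of_notMem he]
      _ = p ^ #(insert e S) * expect Ω p (fun R => f (R ∪ insert e S)) := by
          rw [ih hS.2 fun R => f (insert e R), card_insert_of_notMem he, pow_succ', mul_assoc]
          simp only [union_insert]

lemma expect_boole_subset {S : Finset α} (hS : S ⊆ Ω) :
    expect Ω p (fun R => if S ⊆ R then 1 else 0) = p ^ #S := by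
  rw [expect_ite_subset hS fun _ => 1, expect_const, mul_one]

end DecidableEq

lemma expect_mul_expect_le (hp : p ∈ Set.Icc 0 1) {f g : Finset α → ℝ} (hf : Antitone f)
    (hg : Antitone g) : expect Ω p f * expect Ω p g ≤ expect Ω p (f * g) := by
  induction Ω using Finset.induction_on generalizing f g with
  | empty => simp [expect_apply, weight]
  | insert e Ω he ih =>
    have insert_mono : Monotone fun R : Finset α => insert e R := fun _ _ => insert_subset_insert e
    have expect_insert_le {h : Finset α → ℝ} (hh : Antitone h) :
        expect Ω p (fun R => h (insert e R)) ≤ expect Ω p h :=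
      expect_mono hp fun R => hh (subset_insert e R)
    have hinsert := ih (hf.comp_monotone insert_mono) (hg.comp_monotone insert_mono)
    rw [expect_insert he, expect_insert he, expect_insert he]
    set f₀ := expect Ω p f
    set g₀ := expect Ω p g
    set f₁ := expect Ω p fun R => f (insert e R)
    set g₁ := expect Ω p fun R => g (insert e R)
    have hcov : 0 ≤ p * (1 - p) * ((f₀ - f₁) * (g₀ - g₁)) :=
      mul_nonneg (mul_nonneg hp.1 (sub_nonneg.2 hp.2)) <|
        mul_nonneg (sub_nonneg.2 (expect_insert_le hf)) (sub_nonneg.2 (expect_insert_le hg))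
    calc _ ≤ (1 - p) * (f₀ * g₀) + p * (f₁ * g₁) := by linarith
      _ ≤ _ := add_le_add (mul_le_mul_of_nonneg_left (ih hf hg) (sub_nonneg.2 hp.2))
          (mul_le_mul_of_nonneg_left hinsert hp.1)

section Janson

variable [DecidableEq α] {ι : Type*} {A : Finset ι} {S : ι → Finset α}

/-- The number of indices `i ∈ A` for which `S i` is contained in `R`. -/
def count (A : Finset ι) (S : ι → Finset α) (R : Finset α) : ℕ := #{i ∈ A | S i ⊆ R}

/-- The expectation of `count A S` for a family of subsets of the ground set. -/
def mean (p : ℝ) (A : Finset ι) (S : ι → Finset α) : ℝ := ∑ i ∈ A, p ^ #(S i)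

/-- The quantity `Δ` of Janson's inequality: the sum of the probabilities that both `S i` and
`S j` are contained in the random subset, over all dependent ordered pairs, including `i = j`. -/
def corr (p : ℝ) (A : Finset ι) (S : ι → Finset α) : ℝ :=
  ∑ i ∈ A, ∑ j ∈ A with ¬ Disjoint (S i) (S j), p ^ #(S i ∪ S j)

lemma cast_count (R : Finset α) : (count A S R : ℝ) = ∑ i ∈ A, if S i ⊆ R then 1 else 0 :=
  natCast_card_filter _ _

lemma count_mono : Monotone (count A S) := fun _ _ h =>
  card_le_card (monotone_filter_right A fun _ _ hi => hi.trans h)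

lemma antitone_exp_neg_count {s : ℝ} (hs : 0 ≤ s) :
    Antitone fun R => Real.exp (-s * count A S R) := fun _ _ h =>
  Real.exp_le_exp.2 (mul_le_mul_of_nonpos_left (mod_cast count_mono h) (neg_nonpos.2 hs))

lemma pow_card_mul_expect_count_union {T : Finset α} (hT : T ⊆ Ω) (hS : ∀ i ∈ A, S i ⊆ Ω) :
    p ^ #T * expect Ω p (fun R => (count A S (R ∪ T) : ℝ)) = ∑ i ∈ A, p ^ #(T ∪ S i) := by
  rw [← expect_ite_subset hT fun R => (count A S R : ℝ)]
  calc expect Ω p (fun R => if T ⊆ R then (count A S R : ℝ) else 0)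
      = expect Ω p (fun R => ∑ i ∈ A, if T ∪ S i ⊆ R then 1 else 0) := by
        refine expect_congr fun R _ => ?_
        by_cases hR : T ⊆ R <;> simp [hR, cast_count, union_subset_iff]
    _ = ∑ i ∈ A, p ^ #(T ∪ S i) := by
        rw [expect_sum]
        exact sum_congr rfl fun i hi => expect_boole_subset (union_subset hT (hS i hi))

lemma expect_count (hS : ∀ i ∈ A, S i ⊆ Ω) :
    expect Ω p (fun R => (count A S R : ℝ)) = mean p A S := by
  simpa only [mean, card_empty, pow_zero, one_mul, union_empty, empty_union] using
    pow_card_mul_expect_count_union (p := p) (empty_subset Ω) hS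

lemma count_union_of_disjoint {T : Finset α} (h : ∀ i ∈ A, Disjoint T (S i)) (R : Finset α) :
    count A S (R ∪ T) = count A S R :=
  congr_arg card <| filter_congr fun i hi =>
    ⟨fun hR => (h i hi).symm.left_le_of_le_sup_right hR, (·.trans subset_union_left)⟩

-- Given `S i ⊆ R`, the indices `j` with `S j` disjoint from `S i` are unaffected, and the Harris
-- inequality separates them from the others.
lemma sub_mul_expect_exp_le_expect_ite_exp (hp : p ∈ Set.Icc 0 1)
    (hS : ∀ i ∈ A, S i ⊆ Ω) {s : ℝ} (hs : 0 ≤ s) {i : ι} (hi : i ∈ A) :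
    (p ^ #(S i) - s * ∑ j ∈ A with ¬ Disjoint (S i) (S j), p ^ #(S i ∪ S j)) *
        expect Ω p (fun R => Real.exp (-s * count A S R)) ≤
      expect Ω p (fun R => if S i ⊆ R then Real.exp (-s * count A S R) else 0) := by
  set D : Finset ι := {j ∈ A | Disjoint (S i) (S j)}
  set N : Finset ι := {j ∈ A | ¬ Disjoint (S i) (S j)}
  have count_eq (R : Finset α) : (count A S R : ℝ) = count N S R + count D S R := by
    simp only [cast_count]
    rw [add_comm, sum_filter_add_sum_filter_not]
  let f : Finset α → ℝ := fun R => Real.exp (-s * count N S (R ∪ S i))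
  let g : Finset α → ℝ := fun R => Real.exp (-s * count D S R)
  have planted : expect Ω p (fun R => if S i ⊆ R then Real.exp (-s * count A S R) else 0) =
      p ^ #(S i) * expect Ω p (f * g) := by
    rw [expect_ite_subset (hS i hi)]
    congr 2 with R
    rw [count_eq, mul_add, Real.exp_add,
      count_union_of_disjoint fun j hj => (mem_filter.1 hj).2, Pi.mul_apply]
  have harris : expect Ω p f * expect Ω p g ≤ expect Ω p (f * g) :=
    expect_mul_expect_le hp
      (fun _ _ h => antitone_exp_neg_count hs (union_subset_union_left h))
      (antitone_exp_neg_count hs)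
  have linear : p ^ #(S i) - s * ∑ j ∈ N, p ^ #(S i ∪ S j) ≤ p ^ #(S i) * expect Ω p f := by
    rw [← pow_card_mul_expect_count_union (hS i hi) fun j hj => hS j (mem_filter.1 hj).1,
      mul_left_comm, ← mul_one_sub, ← expect_const_mul, ← expect_const (Ω := Ω) (p := p) 1,
      ← expect_sub]
    refine mul_le_mul_of_nonneg_left (expect_mono hp fun R => ?_) (pow_nonneg hp.1 _)
    linarith [Real.add_one_le_exp (-s * count N S (R ∪ S i))]
  have drop : expect Ω p (fun R => Real.exp (-s * count A S R)) ≤ expect Ω p g :=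
    expect_mono hp fun R => Real.exp_le_exp.2 <|
      mul_le_mul_of_nonpos_left (by rw [count_eq]; simp) (neg_nonpos.2 hs)
  rw [planted]
  calc _ ≤ p ^ #(S i) * expect Ω p f * expect Ω p (fun R => Real.exp (-s * count A S R)) :=
        mul_le_mul_of_nonneg_right linear (expect_nonneg hp fun _ => (Real.exp_pos _).le)
    _ ≤ p ^ #(S i) * expect Ω p f * expect Ω p g :=
        mul_le_mul_of_nonneg_left drop (mul_nonneg (pow_nonneg hp.1 _)
          (expect_nonneg hp fun _ => (Real.exp_pos _).le))
    _ ≤ p ^ #(S i) * expect Ω p (f * g) := by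
        rw [mul_assoc]
        exact mul_le_mul_of_nonneg_left harris (pow_nonneg hp.1 _)

lemma sub_corr_mul_expect_exp_le (hp : p ∈ Set.Icc 0 1) (hS : ∀ i ∈ A, S i ⊆ Ω)
    {s : ℝ} (hs : 0 ≤ s) :
    (mean p A S - s * corr p A S) * expect Ω p (fun R => Real.exp (-s * count A S R)) ≤
      expect Ω p (fun R => count A S R * Real.exp (-s * count A S R)) := by
  calc _ = ∑ i ∈ A, (p ^ #(S i) - s * ∑ j ∈ A with ¬ Disjoint (S i) (S j), p ^ #(S i ∪ S j)) *
          expect Ω p (fun R => Real.exp (-s * count A S R)) := by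
        rw [← sum_mul, sum_sub_distrib, ← mul_sum, mean, corr]
    _ ≤ ∑ i ∈ A, expect Ω p (fun R => if S i ⊆ R then Real.exp (-s * count A S R) else 0) :=
        sum_le_sum fun i hi => sub_mul_expect_exp_le_expect_ite_exp hp hS hs hi
    _ = expect Ω p (fun R => count A S R * Real.exp (-s * count A S R)) := by
        rw [← expect_sum]
        refine expect_congr fun R _ => ?_
        rw [← sum_filter, sum_const, nsmul_eq_mul, count]

lemma expect_exp_neg_count_le (hp : p ∈ Set.Icc 0 1) (hS : ∀ i ∈ A, S i ⊆ Ω)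
    {s : ℝ} (hs : 0 ≤ s) :
    expect Ω p (fun R => Real.exp (-s * count A S R)) ≤
      Real.exp (-s * mean p A S + s ^ 2 * corr p A S / 2) := by
  set M := mean p A S
  set Δ := corr p A S
  let e (s : ℝ) (R : Finset α) : ℝ := s * (M - count A S R) - s ^ 2 * Δ / 2
  have exp_e (s : ℝ) (R : Finset α) : Real.exp (e s R) =
      Real.exp (s * M - s ^ 2 * Δ / 2) * Real.exp (-s * count A S R) := by
    rw [← Real.exp_add]; congr 1; ring
  have hderiv (s : ℝ) : HasDerivAt (fun s => expect Ω p fun R => Real.exp (e s R))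
      (expect Ω p fun R => Real.exp (e s R) * (M - count A S R - s * Δ)) s := by
    refine hasDerivAt_expect (f' := fun s R => Real.exp (e s R) * (M - count A S R - s * Δ))
      fun R => HasDerivAt.exp ?_
    convert! ((hasDerivAt_id s).mul_const (M - (count A S R : ℝ))).sub
      (((hasDerivAt_pow 2 s).mul_const Δ).div_const 2) using 1
    simp
    ring
  have hderiv_nonpos {s : ℝ} (hs : 0 ≤ s) :
      expect Ω p (fun R => Real.exp (e s R) * (M - count A S R - s * Δ)) ≤ 0 := by
    have split : (fun R => Real.exp (e s R) * (M - count A S R - s * Δ)) = fun R =>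
        Real.exp (s * M - s ^ 2 * Δ / 2) * ((M - s * Δ) * Real.exp (-s * count A S R) -
          count A S R * Real.exp (-s * count A S R)) := by
      funext R; rw [exp_e]; ring
    rw [split, expect_const_mul, expect_sub, expect_const_mul]
    exact mul_nonpos_of_nonneg_of_nonpos (Real.exp_pos _).le
      (sub_nonpos.2 (sub_corr_mul_expect_exp_le hp hS hs))
  have hanti : AntitoneOn (fun s => expect Ω p fun R => Real.exp (e s R)) (Set.Ici 0) :=
    antitoneOn_of_deriv_nonpos (convex_Ici 0)
      (fun s _ => (hderiv s).continuousAt.continuousWithinAt)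
      (fun s _ => (hderiv s).differentiableAt.differentiableWithinAt)
      fun s hs => (hderiv s).deriv.trans_le (hderiv_nonpos (interior_subset hs))
  have hle : expect Ω p (fun R => Real.exp (e s R)) ≤ 1 := by
    refine (hanti (Set.mem_Ici.2 le_rfl) (Set.mem_Ici.2 hs) hs).trans_eq ?_
    simp [e, expect_const]
  simp only [exp_e, expect_const_mul] at hle
  rw [neg_mul, ← sub_eq_neg_add, ← neg_sub, Real.exp_neg, ← one_div, le_div_iff₀' (Real.exp_pos _)]
  exact hle

theorem prob_count_lt_le (hp : p ∈ Set.Icc 0 1) (hS : ∀ i ∈ A, S i ⊆ Ω) {D t : ℝ}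
    (hD : corr p A S ≤ D) (hD₀ : 0 < D) (ht : 0 ≤ t) :
    prob Ω p (fun R => count A S R < mean p A S - t) ≤ Real.exp (-(t ^ 2 / (2 * D))) := by
  set M := mean p A S
  set s := t / D with hs
  have hs₀ : 0 ≤ s := by positivity
  calc prob Ω p (fun R => count A S R < M - t)
      ≤ expect Ω p (fun R => Real.exp (s * (M - t)) * Real.exp (-s * count A S R)) := by
        refine prob_le_expect hp (fun R => by positivity) fun R hR => ?_
        rw [← Real.exp_add]
        exact Real.one_le_exp (by linarith [mul_le_mul_of_nonneg_left hR.le hs₀])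
    _ ≤ Real.exp (s * (M - t)) * Real.exp (-s * M + s ^ 2 * D / 2) := by
        rw [expect_const_mul]
        gcongr
        exact (expect_exp_neg_count_le hp hS hs₀).trans (by gcongr)
    _ = Real.exp (-(t ^ 2 / (2 * D))) := by
        rw [← Real.exp_add, hs]
        congr 1
        field_simp
        ring

lemma expect_count_sub_mean_sq_le (hp : p ∈ Set.Icc 0 1) (hS : ∀ i ∈ A, S i ⊆ Ω) :
    expect Ω p (fun R => (count A S R - mean p A S) ^ 2) ≤ corr p A S := by
  set M := mean p A S
  have second_moment :
      expect Ω p (fun R => (count A S R : ℝ) ^ 2) = ∑ i ∈ A, ∑ j ∈ A, p ^ #(S i ∪ S j) := by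
    have (R : Finset α) : (count A S R : ℝ) ^ 2 =
        ∑ i ∈ A, ∑ j ∈ A, if S i ∪ S j ⊆ R then 1 else 0 := by
      simp only [sq, cast_count, sum_mul_sum, union_subset_iff, ite_and, ite_mul, one_mul, zero_mul]
    simp only [this, expect_sum]
    exact sum_congr rfl fun i hi => sum_congr rfl fun j hj =>
      expect_boole_subset (union_subset (hS i hi) (hS j hj))
  have expand : (fun R => ((count A S R : ℝ) - M) ^ 2) =
      fun R => (count A S R : ℝ) ^ 2 - (2 * M * count A S R - M ^ 2) := by
    funext R; ring
  rw [expand, expect_sub, expect_sub, expect_const_mul, expect_count hS, expect_const,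
    second_moment]
  calc _ = ∑ i ∈ A, ∑ j ∈ A, (p ^ #(S i ∪ S j) - p ^ #(S i) * p ^ #(S j)) := by
        simp only [sum_sub_distrib, ← sum_mul_sum]
        rw [← mean]; ring
    _ ≤ corr p A S := by
        refine sum_le_sum fun i _ => ?_
        rw [sum_filter]
        refine sum_le_sum fun j _ => ?_
        split_ifs with h
        · rw [card_union_of_disjoint h, pow_add, sub_self]
        · exact sub_le_self _ (mul_nonneg (pow_nonneg hp.1 _) (pow_nonneg hp.1 _))

theorem prob_lt_count_le (hp : p ∈ Set.Icc 0 1) (hS : ∀ i ∈ A, S i ⊆ Ω) {t : ℝ} (ht : 0 < t) :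
    prob Ω p (fun R => mean p A S + t < count A S R) ≤ corr p A S / t ^ 2 := by
  set M := mean p A S
  calc _ ≤ expect Ω p (fun R => (t ^ 2)⁻¹ * (count A S R - M) ^ 2) := by
        refine prob_le_expect hp (fun R => by positivity) fun R hR => ?_
        rw [← div_eq_inv_mul, one_le_div (by positivity)]
        exact pow_le_pow_left₀ ht.le (by linarith) 2
    _ ≤ corr p A S / t ^ 2 := by
        rw [expect_const_mul, ← div_eq_inv_mul]
        gcongr
        exact expect_count_sub_mean_sq_le hp hS

end Janson

end RandomSubset

section Tuples

variable {ι : Type*} [Fintype ι] [DecidableEq ι]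

-- Resampling the `i`-th coordinate: `(w, v) ↦ (Function.update w i v, w i)` is injective.
lemma card_filter_apply_mul_card_le {τ : Type*} (T : Finset τ) (i : ι) (R : (ι → τ) → τ → Prop)
    [∀ w, DecidablePred (R w)] (hR : ∀ w v, R (Function.update w i v) = R w) {c : ℝ}
    (hc : ∀ w ∈ Fintype.piFinset fun _ => T, (#{v ∈ T | R w v} : ℝ) ≤ c) :
    (#{w ∈ Fintype.piFinset fun _ : ι => T | R w (w i)} : ℝ) * #T ≤ c * #T ^ Fintype.card ι := by
  have hinj : #({w ∈ Fintype.piFinset fun _ : ι => T | R w (w i)} ×ˢ T) ≤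
      #((Fintype.piFinset fun _ : ι => T).sigma fun w => {v ∈ T | R w v}) := by
    refine card_le_card_of_injOn (fun y => ⟨Function.update y.1 i y.2, y.1 i⟩) ?_ ?_
    · rintro ⟨w, v⟩ h
      simp only [coe_product, Set.mem_prod, mem_coe, mem_filter, Fintype.mem_piFinset] at h
      simp only [coe_sigma, Set.mem_sigma_iff, mem_coe, Fintype.mem_piFinset, mem_filter, hR]
      exact ⟨Function.forall_update_iff w (p := fun _ u => u ∈ T) |>.2 ⟨h.2, fun j _ => h.1.1 j⟩,
        h.1.1 i, h.1.2⟩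
    · rintro ⟨w, v⟩ - ⟨w', v'⟩ - h
      simp only [Sigma.mk.injEq, heq_eq_eq] at h
      have hv : v = v' := by simpa using congr_fun h.1 i
      have hw : w = w' := by
        rw [← Function.update_eq_self i w, ← Function.update_eq_self i w', ← h.2,
          ← Function.update_idem v (w i) w, h.1, Function.update_idem]
      rw [hv, hw]
  rw [card_product, card_sigma] at hinj
  calc _ ≤ ∑ w ∈ Fintype.piFinset fun _ : ι => T, (#{v ∈ T | R w v} : ℝ) := mod_cast hinj
    _ ≤ ∑ _w ∈ Fintype.piFinset fun _ : ι => T, c := sum_le_sum hc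
    _ = c * #T ^ Fintype.card ι := by
      rw [sum_const, nsmul_eq_mul, mul_comm, Fintype.card_piFinset, prod_const, card_univ,
        Nat.cast_pow]

variable {V : Type*} [Fintype V] [DecidableEq V]

-- A tuple covering `Q` and a point of `Q → V` are encoded by a section `g : Q → ι` of the tuple
-- and the tuple overwritten along `g`.
lemma card_filter_subset_image_mul_le (Q : Finset V) :
    #{w : ι → V | Q ⊆ univ.image w} * Fintype.card V ^ #Q ≤
      Fintype.card ι ^ #Q * Fintype.card V ^ Fintype.card ι := by
  have hsection (w : {w : ι → V // Q ⊆ univ.image w}) : ∃ g : Q → ι, ∀ q, w.1 (g q) = q :=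
    Classical.skolem.1 fun q : Q => by simpa using w.2 q.2
  choose g hg using hsection
  have hg_inj (w) : Function.Injective (g w) := fun q q' h =>
    Subtype.ext (by rw [← hg w q, ← hg w q', h])
  have hinj : Function.Injective fun y : {w : ι → V // Q ⊆ univ.image w} × (Q → V) =>
      (g y.1, Function.extend (g y.1) y.2 y.1.1) := by
    rintro ⟨w, u⟩ ⟨w', u'⟩ h
    obtain ⟨hgg, hext⟩ := Prod.mk.inj h
    simp only at hgg hext
    have hu : u = u' := by
      rw [← Function.extend_comp (hg_inj w) u w.1, hext, hgg, Function.extend_comp (hg_inj w')]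
    have hw : w = w' := by
      refine Subtype.ext (funext fun m => ?_)
      by_cases hm : ∃ q, g w q = m
      · obtain ⟨q, rfl⟩ := hm
        rw [hg w q, hgg, hg w' q]
      · rw [← Function.extend_apply' u w.1 m hm, hext,
          Function.extend_apply' _ _ _ (hgg ▸ hm)]
    rw [hu, hw]
  rw [← Fintype.card_subtype, ← Fintype.card_coe Q]
  simpa only [Fintype.card_prod, Fintype.card_fun] using Fintype.card_le_of_injective _ hinj

lemma card_filter_apply_mem_mul_card_le (m : ι) (U : Finset V) :
    (#{w : ι → V | w m ∈ U} : ℝ) * Fintype.card V ≤ #U * (Fintype.card V : ℝ) ^ Fintype.card ι := by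
  simpa only [Fintype.piFinset_univ, card_univ] using
    card_filter_apply_mul_card_le univ m (fun _ v => v ∈ U) (fun _ _ => rfl)
      fun _ _ => by rw [filter_univ_mem]

lemma card_filter_apply_eq_apply_mul_card_le {i j : ι} (hij : i ≠ j) :
    (#{w : ι → V | w i = w j} : ℝ) * Fintype.card V ≤
      (Fintype.card V : ℝ) ^ Fintype.card ι := by
  simpa only [Fintype.piFinset_univ, card_univ, one_mul] using
    card_filter_apply_mul_card_le (τ := V) univ i (fun w v => v = w j) (c := 1)
      (fun w v => by simp only [Function.update_of_ne hij.symm])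
      fun w _ => by rw [filter_eq', if_pos (mem_univ _), card_singleton, Nat.cast_one]

lemma le_mul_card_filter_injective_apply_notMem (m : ι) (U : Finset V) :
    ((Fintype.card V : ℝ) - #U - (Fintype.card ι : ℝ) ^ 2) *
        (Fintype.card V : ℝ) ^ Fintype.card ι ≤
      Fintype.card V * #{w : ι → V | Function.Injective w ∧ w m ∉ U} := by
  set n := Fintype.card V
  set b := Fintype.card ι
  set D : Finset (ι × ι) := univ.offDiag
  have hcover : (univ : Finset (ι → V)) ⊆
      ({w | Function.Injective w ∧ w m ∉ U} : Finset (ι → V)) ∪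
        (({w | w m ∈ U} : Finset (ι → V)) ∪ D.biUnion fun q => {w | w q.1 = w q.2}) := fun w _ => by
    simp only [mem_union, mem_filter_univ, mem_biUnion, D, mem_offDiag, mem_univ, true_and,
      Prod.exists]
    by_contra! h
    exact h.2.1 (h.1 fun i j hij => by_contra fun hne => h.2.2 i j hne hij)
  have hcount : n ^ b ≤ #{w : ι → V | Function.Injective w ∧ w m ∉ U} +
      (#{w : ι → V | w m ∈ U} + ∑ q ∈ D, #{w : ι → V | w q.1 = w q.2}) := by
    calc n ^ b = #(univ : Finset (ι → V)) := by rw [card_univ, Fintype.card_fun]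
      _ ≤ _ := (card_le_card hcover).trans <| (card_union_le _ _).trans <|
        Nat.add_le_add_left ((card_union_le _ _).trans (Nat.add_le_add_left card_biUnion_le _)) _
  have hD : (∑ q ∈ D, (#{w : ι → V | w q.1 = w q.2} : ℝ)) * n ≤ (b : ℝ) ^ 2 * (n : ℝ) ^ b := by
    calc _ ≤ ∑ _q ∈ D, (n : ℝ) ^ b := by
          rw [sum_mul]
          exact sum_le_sum fun q hq =>
            card_filter_apply_eq_apply_mul_card_le (mem_offDiag.1 hq).2.2
      _ ≤ (b : ℝ) ^ 2 * (n : ℝ) ^ b := by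
          rw [sum_const, nsmul_eq_mul]
          gcongr
          exact_mod_cast (offDiag_card _).trans_le (by rw [card_univ, sq]; exact Nat.sub_le _ _)
  have hU := card_filter_apply_mem_mul_card_le m U
  have hcount' : (n : ℝ) ^ b ≤ #{w : ι → V | Function.Injective w ∧ w m ∉ U} +
      (#{w : ι → V | w m ∈ U} + ∑ q ∈ D, (#{w : ι → V | w q.1 = w q.2} : ℝ)) := mod_cast hcount
  linarith [mul_le_mul_of_nonneg_left hcount' n.cast_nonneg]

end Tuples

section Paths

lemma edgeIdx_eq_Ico (k d x i : ℕ) : edgeIdx k d x i = Ico (x + i * d) (x + i * d + k) := by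
  rw [edgeIdx, range_eq_Ico, image_add_left_Ico, add_zero]

lemma le_card_biUnion_edgeIdx {k d : ℕ} (hd : d ≤ k) (x : ℕ) {I : Finset ℕ} (hI : I.Nonempty) :
    d * #I + (k - d) ≤ #(I.biUnion (edgeIdx k d x)) := by
  induction I using Finset.induction_on_max with
  | empty => exact absurd hI not_nonempty_empty
  | insert i I hlt ih =>
    have hi : i ∉ I := fun h => (hlt i h).false
    rw [card_insert_of_notMem hi, biUnion_insert]
    obtain rfl | hI := I.eq_empty_or_nonempty
    · simp [edgeIdx_eq_Ico, hd]
    have hdisj : Disjoint (Ico (x + i * d + (k - d)) (x + i * d + k))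
        (I.biUnion (edgeIdx k d x)) := by
      refine (disjoint_biUnion_right _ _ _).2 fun j hj => disjoint_left.2 fun y hy hy' => ?_
      rw [edgeIdx_eq_Ico, mem_Ico] at hy'
      have := Nat.mul_le_mul_right d (hlt j hj)
      rw [Nat.succ_mul] at this
      have := (mem_Ico.1 hy).1
      omega
    calc d * (#I + 1) + (k - d)
        = #(Ico (x + i * d + (k - d)) (x + i * d + k)) + (d * #I + (k - d)) := by
          rw [Nat.card_Ico, mul_add_one]; omega
      _ ≤ #(Ico (x + i * d + (k - d)) (x + i * d + k)) + #(I.biUnion (edgeIdx k d x)) :=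
          Nat.add_le_add_left (ih hI) _
      _ ≤ #(edgeIdx k d x i ∪ I.biUnion (edgeIdx k d x)) := by
          rw [← card_union_of_disjoint hdisj, edgeIdx_eq_Ico k d x i]
          exact card_le_card (union_subset_union_left (Ico_subset_Ico_left (Nat.le_add_right _ _)))

/-- The positions, among `b` ordered vertices, of the `i`-th edge of `P_{a,x}`. -/
def edgePos (b k ℓ x i : ℕ) : Finset (Fin b) := {m | (m : ℕ) ∈ edgeIdx k (k - ℓ) x i}

variable {V : Type*} [DecidableEq V] {k ℓ a b x : ℕ}

/-- The edges of the copy of `P_{a,x}` on the ordered tuple of vertices `w`. -/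
def pathEdges (k ℓ a x : ℕ) (w : Fin b → V) : Finset (Finset V) :=
  (range a).image fun i => (edgePos b k ℓ x i).image w

lemma map_valEmbedding_edgePos (hlk : ℓ < k) (hb : x + ℓ + (k - ℓ) * a ≤ b) {i : ℕ} (hi : i < a) :
    (edgePos b k ℓ x i).map Fin.valEmbedding = edgeIdx k (k - ℓ) x i := by
  have hfit : x + i * (k - ℓ) + k ≤ b := by
    have := Nat.mul_le_mul_right (k - ℓ) hi
    rw [Nat.succ_mul, mul_comm a] at this
    omega
  ext y
  simp only [edgePos, mem_map, mem_filter_univ, Fin.valEmbedding_apply]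
  refine ⟨fun ⟨_, hm, hy⟩ => hy ▸ hm, fun hy => ⟨⟨y, ?_⟩, hy, rfl⟩⟩
  rw [edgeIdx_eq_Ico, mem_Ico] at hy
  omega

lemma card_edgePos (hlk : ℓ < k) (hb : x + ℓ + (k - ℓ) * a ≤ b) {i : ℕ} (hi : i < a) :
    #(edgePos b k ℓ x i) = k := by
  rw [← card_map Fin.valEmbedding, map_valEmbedding_edgePos hlk hb hi, edgeIdx_eq_Ico,
    Nat.card_Ico, Nat.add_sub_cancel_left]

lemma card_pathEdges (hlk : ℓ < k) (hb : x + ℓ + (k - ℓ) * a ≤ b) {w : Fin b → V}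
    (hw : Function.Injective w) : #(pathEdges k ℓ a x w) = a := by
  rw [pathEdges, card_image_of_injOn, card_range]
  intro i hi j hj hij
  have hpos : edgePos b k ℓ x i = edgePos b k ℓ x j := image_injective hw hij
  have hidx := congr_arg (map Fin.valEmbedding) hpos
  rw [map_valEmbedding_edgePos hlk hb (mem_range.1 hi),
    map_valEmbedding_edgePos hlk hb (mem_range.1 hj), edgeIdx_eq_Ico, edgeIdx_eq_Ico] at hidx
  have hle := ((Ico_subset_Ico_iff (by omega)).1 hidx.le).1
  have hge := ((Ico_subset_Ico_iff (by omega)).1 hidx.ge).1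
  exact Nat.eq_of_mul_eq_mul_right (Nat.sub_pos_of_lt hlk) (by omega)

lemma le_card_biUnion_of_subset_pathEdges (hlk : ℓ < k) (hb : x + ℓ + (k - ℓ) * a ≤ b)
    {w : Fin b → V} (hw : Function.Injective w) {F : Finset (Finset V)}
    (hF : F ⊆ pathEdges k ℓ a x w) (hF₀ : F.Nonempty) :
    (k - ℓ) * #F + ℓ ≤ #(F.biUnion id) := by
  obtain ⟨I, hIa, rfl⟩ := subset_image_iff.1 hF
  have hmap : (I.biUnion (edgePos b k ℓ x)).map Fin.valEmbedding =
      I.biUnion (edgeIdx k (k - ℓ) x) := by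
    rw [map_eq_image, biUnion_image]
    exact biUnion_congr rfl fun i hi => by
      rw [← map_eq_image, map_valEmbedding_edgePos hlk hb (mem_range.1 (hIa hi))]
  have hcard := le_card_biUnion_edgeIdx (Nat.sub_le k ℓ) x (image_nonempty.1 hF₀)
  rw [Nat.sub_sub_self hlk.le, ← hmap, card_map] at hcard
  calc _ ≤ (k - ℓ) * #I + ℓ := by gcongr; exact card_image_le
    _ ≤ #((I.biUnion (edgePos b k ℓ x)).image w) := by rwa [card_image_of_injective _ hw]
    _ = #((I.image fun i => (edgePos b k ℓ x i).image w).biUnion id) := by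
      rw [biUnion_image, image_biUnion]; rfl

lemma biUnion_subset_image_of_subset_pathEdges {w : Fin b → V} {F : Finset (Finset V)}
    (hF : F ⊆ pathEdges k ℓ a x w) : F.biUnion id ⊆ univ.image w :=
  biUnion_subset.2 fun e he => by
    obtain ⟨i, -, rfl⟩ := mem_image.1 (hF he)
    exact image_subset_image (subset_univ _)

lemma spansPax_iff {n : ℕ} {E : Finset (Finset (Fin n))} {w : Fin b → Fin n} :
    SpansPax k ℓ a x E w ↔ Function.Injective w ∧ pathEdges k ℓ a x w ⊆ E := by
  simp only [SpansPax, pathEdges, edgePos, image_subset_iff, mem_range]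

lemma pathEdges_subset_kSets {n : ℕ} (hlk : ℓ < k) (hb : x + ℓ + (k - ℓ) * a ≤ b)
    {w : Fin b → Fin n} (hw : Function.Injective w) : pathEdges k ℓ a x w ⊆ kSets n k :=
  image_subset_iff.2 fun _ hi => mem_powersetCard_univ.2 <| by
    rw [card_image_of_injective _ hw, card_edgePos hlk hb (mem_range.1 hi)]

variable [Fintype V] {p L : ℝ} {A : Finset (Fin b → V)}

lemma sum_common_pathEdges_mul_le (hlk : ℓ < k) (hb : x + ℓ + (k - ℓ) * a ≤ b) (hp : 0 ≤ p)
    (hL : ∀ e ∈ Icc 1 a, L ≤ (Fintype.card V : ℝ) ^ ((k - ℓ) * e + ℓ) * p ^ e)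
    (hA : ∀ w ∈ A, Function.Injective w) {w : Fin b → V} (hw : w ∈ A) {F : Finset (Finset V)}
    (hF : F ⊆ pathEdges k ℓ a x w) (hF₀ : F.Nonempty) :
    (∑ w' ∈ A with pathEdges k ℓ a x w ∩ pathEdges k ℓ a x w' = F,
        p ^ #(pathEdges k ℓ a x w ∪ pathEdges k ℓ a x w')) * L ≤
      b ^ b * (Fintype.card V : ℝ) ^ b * p ^ (2 * a) := by
  set n := Fintype.card V
  set A' : Finset (Fin b → V) := {w' ∈ A | pathEdges k ℓ a x w ∩ pathEdges k ℓ a x w' = F}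
  set Q := F.biUnion id
  have hFa : #F ≤ a := (card_le_card hF).trans_eq (card_pathEdges hlk hb (hA w hw))
  have hterm : ∀ w' ∈ A', p ^ #(pathEdges k ℓ a x w ∪ pathEdges k ℓ a x w') = p ^ (2 * a - #F) := by
    intro w' hw'
    obtain ⟨hw'A, hinter⟩ := mem_filter.1 hw'
    rw [card_union, hinter, card_pathEdges hlk hb (hA w hw), card_pathEdges hlk hb (hA w' hw'A),
      two_mul]
  have hcover : A' ⊆ univ.filter fun w' : Fin b → V => Q ⊆ univ.image w' := fun w' hw' =>
    (mem_filter_univ _).2 <| biUnion_subset_image_of_subset_pathEdges <|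
      (mem_filter.1 hw').2 ▸ inter_subset_right
  have hcount : (#A' : ℝ) * n ^ #Q ≤ b ^ #Q * n ^ b := by
    have := (Nat.mul_le_mul_right _ (card_le_card hcover)).trans
      (card_filter_subset_image_mul_le (ι := Fin b) Q)
    rw [Fintype.card_fin] at this
    exact_mod_cast this
  have hQ : (k - ℓ) * #F + ℓ ≤ #Q := le_card_biUnion_of_subset_pathEdges hlk hb (hA w hw) hF hF₀
  have hQb : #Q ≤ b := by
    simpa using (card_le_card (biUnion_subset_image_of_subset_pathEdges hF)).trans card_image_le
  have hQ₀ : 1 ≤ #Q :=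
    (Nat.mul_pos (Nat.sub_pos_of_lt hlk) hF₀.card_pos).trans_le ((Nat.le_add_right _ _).trans hQ)
  have hn : (1 : ℝ) ≤ n := mod_cast hQ₀.trans (card_le_univ Q)
  have hb₁ : (1 : ℝ) ≤ b := mod_cast hQ₀.trans hQb
  calc _ = #A' * p ^ (2 * a - #F) * L := by rw [sum_congr rfl hterm, sum_const, nsmul_eq_mul]
    _ ≤ #A' * p ^ (2 * a - #F) * (n ^ ((k - ℓ) * #F + ℓ) * p ^ #F) := by
      gcongr
      exact hL _ (mem_Icc.2 ⟨hF₀.card_pos, hFa⟩)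
    _ = #A' * n ^ ((k - ℓ) * #F + ℓ) * p ^ (2 * a) := by
      rw [← Nat.sub_add_cancel (by omega : #F ≤ 2 * a), pow_add p, Nat.add_sub_cancel]
      ring
    _ ≤ #A' * n ^ #Q * p ^ (2 * a) := by gcongr
    _ ≤ b ^ #Q * n ^ b * p ^ (2 * a) := by gcongr
    _ ≤ b ^ b * n ^ b * p ^ (2 * a) := by gcongr

lemma corr_pathEdges_mul_le (hlk : ℓ < k) (hb : x + ℓ + (k - ℓ) * a ≤ b) (hp : 0 ≤ p)
    (hL : ∀ e ∈ Icc 1 a, L ≤ (Fintype.card V : ℝ) ^ ((k - ℓ) * e + ℓ) * p ^ e)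
    (hA : ∀ w ∈ A, Function.Injective w) :
    RandomSubset.corr p A (pathEdges k ℓ a x) * L ≤
      2 ^ a * b ^ b * ((Fintype.card V : ℝ) ^ b * p ^ a) ^ 2 := by
  set n := Fintype.card V
  have hdep : ∀ w ∈ A, (∑ w' ∈ A with ¬ Disjoint (pathEdges k ℓ a x w) (pathEdges k ℓ a x w'),
      p ^ #(pathEdges k ℓ a x w ∪ pathEdges k ℓ a x w')) * L ≤
        2 ^ a * (b ^ b * n ^ b * p ^ (2 * a)) := by
    intro w hw
    set P := (pathEdges k ℓ a x w).powerset.erase ∅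
    have hmaps : ∀ w' ∈ ({w' ∈ A | ¬ Disjoint (pathEdges k ℓ a x w) (pathEdges k ℓ a x w')} :
        Finset (Fin b → V)), pathEdges k ℓ a x w ∩ pathEdges k ℓ a x w' ∈ P := fun w' hw' =>
      mem_erase.2 ⟨fun h => (mem_filter.1 hw').2 (disjoint_iff_inter_eq_empty.2 h),
        mem_powerset.2 inter_subset_left⟩
    rw [← sum_fiberwise_of_maps_to hmaps, sum_mul]
    calc _ ≤ ∑ _F ∈ P, (b : ℝ) ^ b * n ^ b * p ^ (2 * a) := by
          refine sum_le_sum fun F hF => ?_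
          obtain ⟨hF₀, hF⟩ := mem_erase.1 hF
          have hF₀ := nonempty_iff_ne_empty.2 hF₀
          rw [filter_filter, filter_congr fun w' _ => and_iff_right_of_imp fun h =>
            not_disjoint_iff_nonempty_inter.2 (h.symm ▸ hF₀)]
          exact sum_common_pathEdges_mul_le hlk hb hp hL hA hw (mem_powerset.1 hF) hF₀
      _ ≤ _ := by
          rw [sum_const, nsmul_eq_mul]
          gcongr
          rw [← card_pathEdges hlk hb (hA w hw)]
          exact_mod_cast card_erase_le.trans_eq (card_powerset (pathEdges k ℓ a x w))
  calc _ ≤ ∑ w ∈ A, 2 ^ a * ((b : ℝ) ^ b * n ^ b * p ^ (2 * a)) := by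
        rw [RandomSubset.corr, sum_mul]
        exact sum_le_sum hdep
    _ ≤ (n : ℝ) ^ b * (2 ^ a * (b ^ b * n ^ b * p ^ (2 * a))) := by
        rw [sum_const, nsmul_eq_mul]
        gcongr
        exact_mod_cast (card_le_univ A).trans_eq (by rw [Fintype.card_fun, Fintype.card_fin])
    _ = _ := by ring

end Paths

section Quasirandom

/-- The ordered `b`-tuples that span a labeled copy of `P_{a,x}` in the `k`-graph `E`. -/
noncomputable def paxCopies {n : ℕ} (k ℓ a x b : ℕ) (E : Finset (Finset (Fin n))) :
    Finset (Fin b → Fin n) := {w | SpansPax k ℓ a x E w}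

/-- A set `T` of tuples that resembles, up to errors of order `γ * μ`, a random set of `μ` tuples:
it is not much larger than `μ`, it meets each family `ℱ i` (whose density among all tuples
should be at least `θ`) in the expected number of members, and the `m`-th entries of its members
are spread evenly over the vertices. -/
structure IsQuasirandom {ι V τ : Type*} [Fintype ι] [Fintype V] [DecidableEq V] (θ γ μ : ℝ)
    (ℱ : τ → Finset (ι → V)) (T : Finset (ι → V)) : Prop where
  card_le : #T ≤ (1 + γ) * μ
  le_card_inter : ∀ i, (θ - γ) * μ ≤ #(ℱ i ∩ T)
  le_card_avoid : ∀ (m : ι) (U : Finset V),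
    (1 - #U / Fintype.card V - 2 * γ) * μ ≤ #{w ∈ T | w m ∉ U}

variable {n k ℓ a x b : ℕ} {p γ R : ℝ} {A : Finset (Fin b → Fin n)}

lemma mem_paxCopies {E : Finset (Finset (Fin n))} {w : Fin b → Fin n} :
    w ∈ paxCopies k ℓ a x b E ↔ SpansPax k ℓ a x E w :=
  mem_filter_univ w

lemma gProb_eq_prob (A : Finset (Finset (Fin n)) → Prop) :
    gProb n k p A = RandomSubset.prob (kSets n k) p A := by
  simp only [gProb, RandomSubset.prob, RandomSubset.expect_apply, RandomSubset.weight, sum_filter,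
    mul_ite, mul_one, mul_zero]

lemma count_pathEdges (hA : ∀ w ∈ A, Function.Injective w) (E : Finset (Finset (Fin n))) :
    RandomSubset.count A (pathEdges k ℓ a x) E = #(A ∩ paxCopies k ℓ a x b E) := by
  rw [RandomSubset.count, ← filter_mem_eq_inter]
  simp only [mem_paxCopies, spansPax_iff]
  exact congr_arg card (filter_congr fun w hw => (and_iff_right (hA w hw)).symm)

lemma mean_pathEdges (hlk : ℓ < k) (hb : x + ℓ + (k - ℓ) * a ≤ b)
    (hA : ∀ w ∈ A, Function.Injective w) :
    RandomSubset.mean p A (pathEdges k ℓ a x) = #A * p ^ a := by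
  rw [RandomSubset.mean, sum_congr rfl fun w hw => by rw [card_pathEdges hlk hb (hA w hw)],
    sum_const, nsmul_eq_mul]

lemma corr_pathEdges_le (hlk : ℓ < k) (hb : x + ℓ + (k - ℓ) * a ≤ b) (hp : 0 ≤ p) (hγ : 0 < γ)
    (hR : 0 < R)
    (hL : ∀ e ∈ Icc 1 a, 2 ^ a * b ^ b / γ ^ 2 * R ≤ (n : ℝ) ^ ((k - ℓ) * e + ℓ) * p ^ e)
    (hA : ∀ w ∈ A, Function.Injective w) :
    RandomSubset.corr p A (pathEdges k ℓ a x) ≤ (γ * ((n : ℝ) ^ b * p ^ a)) ^ 2 / R := by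
  have hcorr := corr_pathEdges_mul_le hlk hb hp (by simpa only [Fintype.card_fin] using hL) hA
  have hK : (0 : ℝ) < 2 ^ a * b ^ b := mul_pos (by positivity) (mod_cast Nat.pow_self_pos)
  rw [Fintype.card_fin] at hcorr
  rw [le_div_iff₀ hR]
  refine le_of_mul_le_mul_left ?_ hK
  calc _ = γ ^ 2 * (RandomSubset.corr p A (pathEdges k ℓ a x) *
          (2 ^ a * b ^ b / γ ^ 2 * R)) := by field_simp
    _ ≤ γ ^ 2 * (2 ^ a * b ^ b * ((n : ℝ) ^ b * p ^ a) ^ 2) := by gcongr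
    _ = _ := by ring

lemma prob_lt_card_inter_paxCopies_le (hlk : ℓ < k) (hb : x + ℓ + (k - ℓ) * a ≤ b)
    (hp : p ∈ Set.Icc 0 1) {t : ℝ} (ht : 0 < t) (hR : 0 < R)
    (hcorr : RandomSubset.corr p A (pathEdges k ℓ a x) ≤ t ^ 2 / R)
    (hA : ∀ w ∈ A, Function.Injective w) :
    RandomSubset.prob (kSets n k) p (fun E => #A * p ^ a + t < #(A ∩ paxCopies k ℓ a x b E)) ≤
      1 / R := by
  have hcheb := RandomSubset.prob_lt_count_le hp
    (fun w hw => pathEdges_subset_kSets hlk hb (hA w hw)) ht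
  simp only [mean_pathEdges hlk hb hA, count_pathEdges hA] at hcheb
  calc _ ≤ _ := hcheb
    _ ≤ t ^ 2 / R / t ^ 2 := by gcongr
    _ = 1 / R := by field_simp

lemma prob_card_inter_paxCopies_lt_le (hlk : ℓ < k) (hb : x + ℓ + (k - ℓ) * a ≤ b)
    (hp : p ∈ Set.Icc 0 1) {t : ℝ} (ht : 0 < t) (hR : 0 < R)
    (hcorr : RandomSubset.corr p A (pathEdges k ℓ a x) ≤ t ^ 2 / R)
    (hA : ∀ w ∈ A, Function.Injective w) :
    RandomSubset.prob (kSets n k) p (fun E => #(A ∩ paxCopies k ℓ a x b E) < #A * p ^ a - t) ≤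
      Real.exp (-(R / 2)) := by
  have hjanson := RandomSubset.prob_count_lt_le hp
    (fun w hw => pathEdges_subset_kSets hlk hb (hA w hw)) hcorr (by positivity) ht.le
  simp only [mean_pathEdges hlk hb hA, count_pathEdges hA] at hjanson
  convert hjanson using 3
  field_simp

lemma isQuasirandom_paxCopies {τ : Type*} {θ : ℝ} {ℱ : τ → Finset (Fin b → Fin n)}
    {E : Finset (Finset (Fin n))} (hp : 0 ≤ p) (hbn : (b : ℝ) ^ 2 ≤ γ * n)
    (hθ : ∀ i, θ * (n : ℝ) ^ b ≤ #(ℱ i))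
    (hall : #((univ.filter fun w : Fin b → Fin n => Function.Injective w) ∩
        paxCopies k ℓ a x b E) ≤
      #(univ.filter fun w : Fin b → Fin n => Function.Injective w) * p ^ a +
        γ * ((n : ℝ) ^ b * p ^ a))
    (hfam : ∀ i, #(ℱ i) * p ^ a - γ * ((n : ℝ) ^ b * p ^ a) ≤ #(ℱ i ∩ paxCopies k ℓ a x b E))
    (havoid : ∀ (m : Fin b) (U : Finset (Fin n)),
      #(univ.filter fun w : Fin b → Fin n => Function.Injective w ∧ w m ∉ U) * p ^ a -
          γ * ((n : ℝ) ^ b * p ^ a) ≤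
        #((univ.filter fun w : Fin b → Fin n => Function.Injective w ∧ w m ∉ U) ∩
          paxCopies k ℓ a x b E)) :
    IsQuasirandom θ γ ((n : ℝ) ^ b * p ^ a) ℱ (paxCopies k ℓ a x b E) where
  card_le := by
    have hinter : (univ.filter fun w : Fin b → Fin n => Function.Injective w) ∩
        paxCopies k ℓ a x b E = paxCopies k ℓ a x b E :=
      inter_eq_right.2 fun w hw => (mem_filter_univ w).2 (mem_paxCopies.1 hw).1
    have hcard : (#(univ.filter fun w : Fin b → Fin n => Function.Injective w) : ℝ) ≤ n ^ b := by
      exact_mod_cast (card_filter_le _ _).trans_eq (by simp)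
    rw [hinter] at hall
    linarith [mul_le_mul_of_nonneg_right hcard (pow_nonneg hp a)]
  le_card_inter i := by
    linarith [hfam i, mul_le_mul_of_nonneg_right (hθ i) (pow_nonneg hp a)]
  le_card_avoid m U := by
    have hn : (0 : ℝ) < n := by
      have hb2 : (0 : ℝ) < b ^ 2 := pow_pos (mod_cast m.pos) 2
      refine n.cast_nonneg.lt_of_ne' fun hn => ?_
      rw [hn, mul_zero] at hbn
      exact hbn.not_gt hb2
    have hinter : (univ.filter fun w : Fin b → Fin n => Function.Injective w ∧ w m ∉ U) ∩
        paxCopies k ℓ a x b E = {w ∈ paxCopies k ℓ a x b E | w m ∉ U} := by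
      ext w
      simp only [mem_inter, mem_filter, mem_univ, true_and, mem_paxCopies, SpansPax]
      tauto
    have hcard : (1 - #U / n - γ) * (n : ℝ) ^ b ≤
        #(univ.filter fun w : Fin b → Fin n => Function.Injective w ∧ w m ∉ U) := by
      have hinj := le_mul_card_filter_injective_apply_notMem m U
      rw [Fintype.card_fin, Fintype.card_fin] at hinj
      refine le_of_mul_le_mul_left ?_ hn
      calc _ = (n - #U - γ * n) * (n : ℝ) ^ b := by field_simp
        _ ≤ (n - #U - (b : ℝ) ^ 2) * n ^ b := by gcongr
        _ ≤ _ := hinj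
    rw [Fintype.card_fin, ← hinter]
    linarith [havoid m U, mul_le_mul_of_nonneg_right hcard (pow_nonneg hp a)]

theorem le_gProb_isQuasirandom_paxCopies {τ : Type*} [Fintype τ] {θ : ℝ}
    {ℱ : τ → Finset (Fin b → Fin n)} (hlk : ℓ < k) (hb : x + ℓ + (k - ℓ) * a ≤ b)
    (hp : p ∈ Set.Ioc 0 1) (hn : 0 < n) (hγ : 0 < γ) (hR : 0 < R)
    (hL : ∀ e ∈ Icc 1 a, 2 ^ a * b ^ b / γ ^ 2 * R ≤ (n : ℝ) ^ ((k - ℓ) * e + ℓ) * p ^ e)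
    (hbn : (b : ℝ) ^ 2 ≤ γ * n) (hinj : ∀ i, ∀ w ∈ ℱ i, Function.Injective w)
    (hθ : ∀ i, θ * (n : ℝ) ^ b ≤ #(ℱ i)) :
    1 - (1 / R + (Fintype.card τ + b * 2 ^ n) * Real.exp (-(R / 2))) ≤
      gProb n k p fun E =>
        IsQuasirandom θ γ ((n : ℝ) ^ b * p ^ a) ℱ (paxCopies k ℓ a x b E) := by
  set μ := (n : ℝ) ^ b * p ^ a
  have hp' : p ∈ Set.Icc 0 1 := Set.Ioc_subset_Icc_self hp
  have ht : 0 < γ * μ := mul_pos hγ (mul_pos (pow_pos (mod_cast hn) b) (pow_pos hp.1 a))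
  have hcorr {A : Finset (Fin b → Fin n)} (hA : ∀ w ∈ A, Function.Injective w) :=
    corr_pathEdges_le hlk hb hp'.1 hγ hR hL hA
  have hupper {A : Finset (Fin b → Fin n)} (hA : ∀ w ∈ A, Function.Injective w) :=
    prob_lt_card_inter_paxCopies_le hlk hb hp' ht hR (hcorr hA) hA
  have hlower {A : Finset (Fin b → Fin n)} (hA : ∀ w ∈ A, Function.Injective w) :=
    prob_card_inter_paxCopies_lt_le hlk hb hp' ht hR (hcorr hA) hA
  let all : Finset (Fin b → Fin n) := {w | Function.Injective w}
  let avoid (q : Fin b × Finset (Fin n)) : Finset (Fin b → Fin n) :=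
    {w | Function.Injective w ∧ w q.1 ∉ q.2}
  let deficient (A : Finset (Fin b → Fin n)) (E : Finset (Finset (Fin n))) : Prop :=
    #(A ∩ paxCopies k ℓ a x b E) < #A * p ^ a - γ * μ
  have hfam : RandomSubset.prob (kSets n k) p (fun E => ∃ i, deficient (ℱ i) E) ≤
      Fintype.card τ * Real.exp (-(R / 2)) :=
    (RandomSubset.prob_exists_le hp' _).trans <|
      (sum_le_card_nsmul _ _ _ fun i _ => hlower (hinj i)).trans_eq (nsmul_eq_mul _ _)
  have havoid : RandomSubset.prob (kSets n k) p (fun E => ∃ q, deficient (avoid q) E) ≤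
      b * 2 ^ n * Real.exp (-(R / 2)) :=
    (RandomSubset.prob_exists_le hp' _).trans <|
      (sum_le_card_nsmul _ _ _ fun q _ => hlower fun w hw => ((mem_filter_univ w).1 hw).1).trans_eq
        (by simp)
  have hbad : RandomSubset.prob (kSets n k) p (fun E =>
        #all * p ^ a + γ * μ < #(all ∩ paxCopies k ℓ a x b E) ∨
          (∃ i, deficient (ℱ i) E) ∨ ∃ q, deficient (avoid q) E) ≤
      1 / R + (Fintype.card τ + b * 2 ^ n) * Real.exp (-(R / 2)) := by
    rw [add_mul]
    exact (RandomSubset.prob_or_le hp' _ _).trans <|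
      add_le_add (hupper fun w hw => (mem_filter_univ w).1 hw) <|
        (RandomSubset.prob_or_le hp' _ _).trans (add_le_add hfam havoid)
  rw [gProb_eq_prob]
  refine (sub_le_sub_left hbad 1).trans ?_
  rw [← RandomSubset.prob_not]
  refine RandomSubset.prob_mono hp' fun E hE => ?_
  simp only [deficient, not_or, not_exists, not_lt] at hE
  exact isQuasirandom_paxCopies hp.1.le hbn hθ hE.1 hE.2.1 fun m U => hE.2.2 (m, U)

end Quasirandom

section RandomSelection

variable {τ σ ι : Type*} [Fintype ι] {T A : Finset τ} {κ ρ : ℝ}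
  {C : τ → τ → Prop} [∀ w, DecidablePred (C w)]

lemma sum_card_offDiag_filter_le [DecidableEq ι] (hT : T.Nonempty) (hκ : 0 ≤ κ)
    (hC : ∀ w ∈ T, (#{w' ∈ T | C w w'} : ℝ) ≤ κ * #T) :
    ∑ s ∈ Fintype.piFinset (fun _ : ι => T),
        (#{q ∈ (univ : Finset ι).offDiag | C (s q.1) (s q.2)} : ℝ) ≤
      κ * Fintype.card ι ^ 2 * (#T : ℝ) ^ Fintype.card ι := by
  have hpair (q) (hq : q ∈ (univ : Finset ι).offDiag) :
      (#{s ∈ Fintype.piFinset fun _ : ι => T | C (s q.1) (s q.2)} : ℝ) ≤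
        κ * (#T : ℝ) ^ Fintype.card ι := by
    have hpos : (0 : ℝ) < #T := mod_cast hT.card_pos
    refine le_of_mul_le_mul_right ?_ hpos
    have hbound := card_filter_apply_mul_card_le T q.2 (fun s v => C (s q.1) v)
      (fun s v => by rw [Function.update_of_ne (mem_offDiag.1 hq).2.2])
      fun s hs => hC (s q.1) (Fintype.mem_piFinset.1 hs q.1)
    linarith
  have hoffDiag : #(univ : Finset ι).offDiag ≤ Fintype.card ι ^ 2 := by
    rw [offDiag_card, card_univ, sq]
    exact Nat.sub_le _ _
  calc _ = ∑ q ∈ (univ : Finset ι).offDiag,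
          (#{s ∈ Fintype.piFinset fun _ : ι => T | C (s q.1) (s q.2)} : ℝ) := by
        exact_mod_cast sum_card_bipartiteAbove_eq_sum_card_bipartiteBelow _
    _ ≤ #(univ : Finset ι).offDiag * (κ * (#T : ℝ) ^ Fintype.card ι) := by
        rw [← nsmul_eq_mul]
        exact sum_le_card_nsmul _ _ _ hpair
    _ ≤ (Fintype.card ι ^ 2 : ℕ) * (κ * (#T : ℝ) ^ Fintype.card ι) := by gcongr
    _ = _ := by push_cast; ring

variable [DecidableEq τ]

lemma sum_exp_neg_card_filter_mem_le [DecidableEq ι] (hA : ρ * #T ≤ #(A ∩ T)) :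
    ∑ s ∈ Fintype.piFinset (fun _ : ι => T), Real.exp (-#{j | s j ∈ A}) ≤
      Real.exp (-(ρ * Fintype.card ι / 2)) * (#T : ℝ) ^ Fintype.card ι := by
  have hexp : Real.exp (-1) ≤ 1 / 2 := by
    rw [Real.exp_neg, ← one_div]
    exact one_div_le_one_div_of_le two_pos (by linarith [Real.add_one_le_exp 1])
  have hprod (s : ι → τ) :
      Real.exp (-#{j | s j ∈ A}) = ∏ j, if s j ∈ A then Real.exp (-1) else 1 := by
    rw [prod_ite, prod_const, prod_const_one, mul_one, ← Real.exp_nat_mul, mul_neg_one]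
  have hsum : ∑ v ∈ T, (if v ∈ A then Real.exp (-1) else 1) ≤ Real.exp (-(ρ / 2)) * #T := by
    have hcard : (#{v ∈ T | v ∈ A} : ℝ) + #{v ∈ T | v ∉ A} = #T := by
      exact_mod_cast card_filter_add_card_filter_not _
    have hinter : A ∩ T = {v ∈ T | v ∈ A} := by rw [inter_comm, filter_mem_eq_inter]
    rw [hinter] at hA
    rw [sum_ite, sum_const, sum_const, nsmul_eq_mul, nsmul_one]
    calc _ ≤ (#{v ∈ T | v ∈ A} : ℝ) * (1 / 2) + #{v ∈ T | v ∉ A} := by gcongr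
      _ ≤ (-(ρ / 2) + 1) * #T := by linarith
      _ ≤ _ := by gcongr; exact Real.add_one_le_exp _
  calc _ = (∑ v ∈ T, if v ∈ A then Real.exp (-1) else 1) ^ Fintype.card ι := by
        simp_rw [hprod]
        rw [← prod_univ_sum (fun _ => T) fun _ v => if v ∈ A then Real.exp (-1) else 1, prod_const,
          card_univ]
    _ ≤ (Real.exp (-(ρ / 2)) * #T) ^ Fintype.card ι := by gcongr
    _ = _ := by
        rw [mul_pow, ← Real.exp_nat_mul]
        ring_nf

lemma sum_exp_sub_card_filter_mem_le [DecidableEq ι] (hA : ρ * #T ≤ #(A ∩ T)) :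
    ∑ s ∈ Fintype.piFinset (fun _ : ι => T),
        Real.exp (ρ * Fintype.card ι / 4 - #{j | s j ∈ A}) ≤
      Real.exp (-(ρ * Fintype.card ι / 4)) * (#T : ℝ) ^ Fintype.card ι :=
  calc _ = Real.exp (ρ * Fintype.card ι / 4) *
          ∑ s ∈ Fintype.piFinset (fun _ : ι => T), Real.exp (-#{j | s j ∈ A}) := by
        simp_rw [sub_eq_add_neg, Real.exp_add, mul_sum]
    _ ≤ Real.exp (ρ * Fintype.card ι / 4) *
          (Real.exp (-(ρ * Fintype.card ι / 2)) * (#T : ℝ) ^ Fintype.card ι) := by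
        gcongr
        exact sum_exp_neg_card_filter_mem_le hA
    _ = _ := by
        rw [← mul_assoc, ← Real.exp_add]
        ring_nf

lemma exists_few_conflicts_many_hits [Nonempty ι] [Fintype σ] {ℱ : σ → Finset τ} (hT : T.Nonempty)
    (hκ : 0 < κ) (hC : ∀ w ∈ T, (#{w' ∈ T | C w w'} : ℝ) ≤ κ * #T)
    (hℱ : ∀ i, ρ * #T ≤ #(ℱ i ∩ T))
    (hσ : Fintype.card σ * Real.exp (-(ρ * Fintype.card ι / 4)) < 1 / 2) :
    ∃ s : ι → τ, (∀ j, s j ∈ T) ∧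
      (#{q ∈ (univ : Finset ι).offDiag | C (s q.1) (s q.2)} : ℝ) ≤ 2 * κ * Fintype.card ι ^ 2 ∧
      ∀ i, ρ * Fintype.card ι / 4 ≤ #{j | s j ∈ ℱ i} := by
  set N := Fintype.card ι
  set S := Fintype.piFinset fun _ : ι => T
  let conflicts (s : ι → τ) : ℝ := #{q ∈ (univ : Finset ι).offDiag | C (s q.1) (s q.2)}
  let deficit (i : σ) (s : ι → τ) : ℝ := Real.exp (ρ * N / 4 - #{j | s j ∈ ℱ i})
  have hN : (0 : ℝ) < N := mod_cast Fintype.card_pos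
  have hpos : (0 : ℝ) < #T ^ N := pow_pos (mod_cast hT.card_pos) N
  have hconflicts : (∑ s ∈ S, conflicts s) / (2 * κ * N ^ 2) ≤ 1 / 2 * #T ^ N := by
    rw [div_le_iff₀ (by positivity)]
    linarith [sum_card_offDiag_filter_le (ι := ι) hT hκ.le hC]
  have hsum : ∑ s ∈ S, (conflicts s / (2 * κ * N ^ 2) + ∑ i, deficit i s) < ∑ _s ∈ S, 1 :=
    calc _ = (∑ s ∈ S, conflicts s) / (2 * κ * N ^ 2) + ∑ i, ∑ s ∈ S, deficit i s := by
          rw [sum_add_distrib, ← sum_div, sum_comm]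
      _ ≤ 1 / 2 * #T ^ N + ∑ _i : σ, Real.exp (-(ρ * N / 4)) * #T ^ N := by
          gcongr with i
          exact sum_exp_sub_card_filter_mem_le (hℱ i)
      _ = (1 / 2 + Fintype.card σ * Real.exp (-(ρ * N / 4))) * #T ^ N := by
          rw [sum_const, nsmul_eq_mul, card_univ]
          ring
      _ < 1 * #T ^ N := by gcongr; linarith
      _ = _ := by simp [S, N]
  obtain ⟨s, hs, hlt⟩ := exists_lt_of_sum_lt hsum
  have hdeficit_nonneg (i) : 0 ≤ deficit i s := by positivity
  have hconflicts_nonneg : 0 ≤ conflicts s / (2 * κ * N ^ 2) := by positivity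
  refine ⟨s, Fintype.mem_piFinset.1 hs, ?_, fun i => ?_⟩
  · rw [← div_le_one (by positivity)]
    linarith [sum_nonneg fun i (_ : i ∈ univ) => hdeficit_nonneg i]
  · have hi := single_le_sum (fun i _ => hdeficit_nonneg i) (mem_univ i)
    have hexp : deficit i s < 1 := by linarith
    rw [Real.exp_lt_one_iff] at hexp
    linarith

lemma exists_subset_image_pairwise_not (hrefl : ∀ w, C w w) (s : ι → τ) :
    ∃ F ⊆ univ.image s, (∀ w ∈ F, ∀ w' ∈ F, w ≠ w' → ¬ C w w') ∧
      ∀ A : Finset τ,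
        #{j | s j ∈ A} ≤ #(A ∩ F) + #{q ∈ (univ : Finset ι).offDiag | C (s q.1) (s q.2)} := by
  let J : Finset ι := {j | ∀ j' ≠ j, ¬ C (s j) (s j')}
  have hJ {j j'} (hj : j ∈ J) (hne : j ≠ j') : ¬ C (s j) (s j') :=
    (mem_filter_univ j).1 hj j' hne.symm
  have hinj : Set.InjOn s J := fun j hj j' _ h => by
    by_contra hne
    exact hJ hj hne (h ▸ hrefl (s j))
  refine ⟨J.image s, image_subset_image (subset_univ J), ?_, fun A => ?_⟩
  · simp only [forall_mem_image]
    exact fun j hj j' _ hne => hJ hj (ne_of_apply_ne s hne)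
  · have hcover : ({j | s j ∈ A} : Finset ι) ⊆ {j ∈ J | s j ∈ A} ∪
        {q ∈ (univ : Finset ι).offDiag | C (s q.1) (s q.2)}.image Prod.fst := by
      intro j hj
      by_cases hjJ : j ∈ J
      · exact mem_union_left _ (mem_filter.2 ⟨hjJ, (mem_filter_univ j).1 hj⟩)
      · simp only [J, mem_filter_univ, not_forall, not_not] at hjJ
        obtain ⟨j', hne, hconflict⟩ := hjJ
        exact mem_union_right _ <| mem_image.2
          ⟨(j, j'), mem_filter.2 ⟨mem_offDiag.2 ⟨mem_univ _, mem_univ _, hne.symm⟩, hconflict⟩, rfl⟩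
    have hkept : #{j ∈ J | s j ∈ A} ≤ #(A ∩ J.image s) := by
      refine card_le_card_of_injOn s (fun j hj => ?_) (hinj.mono (filter_subset _ _))
      obtain ⟨hjJ, hjA⟩ := mem_filter.1 hj
      exact mem_inter.2 ⟨hjA, mem_image_of_mem s hjJ⟩
    exact (card_le_card hcover).trans <| (card_union_le _ _).trans <|
      add_le_add hkept card_image_le

end RandomSelection

section Trimming

variable {ι V τ : Type*} [Fintype ι] [Fintype V] [DecidableEq V] {θ γ μ : ℝ}
  {ℱ : τ → Finset (ι → V)} {T : Finset (ι → V)}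

/-- The tuples `w` and `w'` have a common entry, that is, they fail to be disjoint. -/
def Meets {ι V : Type*} (w w' : ι → V) : Prop := ∃ m m', w m = w' m'

/-- The vertices that occur at some position in more than `2 * μ / |V|` tuples of `T`, twice the
average when `T` consists of `μ` tuples. -/
noncomputable def heavyVertices (μ : ℝ) (T : Finset (ι → V)) : Finset V :=
  univ.biUnion fun m => {v | 2 * μ / Fintype.card V < #{w ∈ T | w m = v}}

/-- The tuples of `T` all of whose entries are not heavy. -/
noncomputable def trim (μ : ℝ) (T : Finset (ι → V)) : Finset (ι → V) :=
  {w ∈ T | ∀ m, w m ∉ heavyVertices μ T}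

lemma IsQuasirandom.card_filter_apply_mem_le (h : IsQuasirandom θ γ μ ℱ T) (m : ι)
    (U : Finset V) : #{w ∈ T | w m ∈ U} ≤ (#U / Fintype.card V + 3 * γ) * μ := by
  have hcard : (#{w ∈ T | w m ∈ U} : ℝ) + #{w ∈ T | w m ∉ U} = #T := by
    exact_mod_cast card_filter_add_card_filter_not _
  linarith [h.card_le, h.le_card_avoid m U]

lemma IsQuasirandom.card_heavyVertices_le [Nonempty V] (h : IsQuasirandom θ γ μ ℱ T) (hμ : 0 < μ) :
    #(heavyVertices μ T) ≤ 3 * Fintype.card ι * γ * Fintype.card V := by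
  have hn : (0 : ℝ) < Fintype.card V := mod_cast Fintype.card_pos
  have hposition (m : ι) :
      (#(univ.filter fun v : V => 2 * μ / Fintype.card V < #{w ∈ T | w m = v}) : ℝ) ≤
        3 * γ * Fintype.card V := by
    set U : Finset V := {v | 2 * μ / Fintype.card V < #{w ∈ T | w m = v}}
    have hfibers : (#{w ∈ T | w m ∈ U} : ℝ) = ∑ v ∈ U, (#{w ∈ T | w m = v} : ℝ) := by
      exact_mod_cast (card_eq_sum_card_fiberwise fun w hw => (mem_filter.1 hw).2).trans <|
        sum_congr rfl fun v hv => by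
          rw [filter_filter]
          exact congr_arg card (filter_congr fun w _ => and_iff_right_of_imp (· ▸ hv))
    have hheavy : #U * (2 * μ / Fintype.card V) ≤ (#U / Fintype.card V + 3 * γ) * μ :=
      calc _ ≤ ∑ v ∈ U, (#{w ∈ T | w m = v} : ℝ) := by
            rw [← nsmul_eq_mul]
            exact card_nsmul_le_sum _ _ _ fun v hv => ((mem_filter_univ v).1 hv).le
        _ ≤ _ := hfibers ▸ h.card_filter_apply_mem_le m U
    rw [← div_le_iff₀ hn]
    refine le_of_mul_le_mul_right ?_ hμ
    linarith [mul_div_left_comm (#U : ℝ) (2 * μ) (Fintype.card V : ℝ),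
      mul_div_right_comm (#U : ℝ) μ (Fintype.card V : ℝ)]
  calc _ ≤ ∑ m : ι, (#(univ.filter fun v : V =>
          2 * μ / Fintype.card V < #{w ∈ T | w m = v}) : ℝ) := mod_cast card_biUnion_le
    _ ≤ ∑ _m : ι, 3 * γ * Fintype.card V := sum_le_sum fun m _ => hposition m
    _ = _ := by rw [sum_const, nsmul_eq_mul, card_univ]; ring

lemma IsQuasirandom.card_sdiff_trim_le [Nonempty ι] [Nonempty V] (h : IsQuasirandom θ γ μ ℱ T)
    (hγ : 0 ≤ γ) (hμ : 0 < μ) : #(T \ trim μ T) ≤ 6 * (Fintype.card ι : ℝ) ^ 2 * γ * μ := by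
  have hb : (1 : ℝ) ≤ Fintype.card ι := mod_cast Fintype.card_pos
  have hn : (0 : ℝ) < Fintype.card V := mod_cast Fintype.card_pos
  have hcover : T \ trim μ T ⊆ univ.biUnion fun m => {w ∈ T | w m ∈ heavyVertices μ T} := by
    intro w hw
    simpa [trim, (mem_sdiff.1 hw).1] using hw
  have hheavy : #(heavyVertices μ T) / Fintype.card V ≤ 3 * Fintype.card ι * γ :=
    (div_le_iff₀ hn).2 (h.card_heavyVertices_le hμ)
  calc _ ≤ ∑ m, (#{w ∈ T | w m ∈ heavyVertices μ T} : ℝ) := by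
        exact_mod_cast (card_le_card hcover).trans card_biUnion_le
    _ ≤ ∑ _m : ι, (3 * Fintype.card ι * γ + 3 * γ) * μ := by
        gcongr with m
        exact (h.card_filter_apply_mem_le m _).trans (by gcongr)
    _ = Fintype.card ι * (3 * Fintype.card ι * γ + 3 * 1 * γ) * μ := by
        rw [sum_const, nsmul_eq_mul, card_univ]; ring
    _ ≤ Fintype.card ι * (3 * Fintype.card ι * γ + 3 * Fintype.card ι * γ) * μ := by gcongr
    _ = _ := by ring

lemma card_filter_meets_trim_le {w : ι → V} (hw : w ∈ trim μ T) :
    #{w' ∈ trim μ T | Meets w w'} ≤ (Fintype.card ι : ℝ) ^ 2 * (2 * μ / Fintype.card V) := by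
  have hcover : {w' ∈ trim μ T | Meets w w'} ⊆
      (univ : Finset (ι × ι)).biUnion fun q => {w' ∈ T | w' q.2 = w q.1} := by
    intro w' hw'
    obtain ⟨hw'T, m, m', hmeet⟩ := mem_filter.1 hw'
    exact mem_biUnion.2 ⟨(m, m'), mem_univ _,
      mem_filter.2 ⟨filter_subset _ _ hw'T, hmeet.symm⟩⟩
  have hlight (q : ι × ι) : (#{w' ∈ T | w' q.2 = w q.1} : ℝ) ≤ 2 * μ / Fintype.card V := by
    by_contra! hheavy
    exact (mem_filter.1 hw).2 q.1 <|
      mem_biUnion.2 ⟨q.2, mem_univ _, (mem_filter_univ _).2 hheavy⟩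
  calc _ ≤ ∑ q : ι × ι, (#{w' ∈ T | w' q.2 = w q.1} : ℝ) := by
        exact_mod_cast (card_le_card hcover).trans card_biUnion_le
    _ ≤ ∑ _q : ι × ι, 2 * μ / Fintype.card V := sum_le_sum fun q _ => hlight q
    _ = _ := by simp [sq]

end Trimming

section DisjointSelection

variable {ι V τ : Type*} [Fintype ι] [Nonempty ι] [Fintype V] [Nonempty V] [DecidableEq V]
  {β γ μ : ℝ} {ℱ : τ → Finset (ι → V)} {T : Finset (ι → V)}

lemma IsQuasirandom.le_card_inter_trim (h : IsQuasirandom (24 * β) γ μ ℱ T) (hγ : 0 ≤ γ)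
    (hγβ : 6 * (Fintype.card ι : ℝ) ^ 2 * γ ≤ β) (hμ : 0 < μ) (i : τ) :
    22 * β * μ ≤ #(ℱ i ∩ trim μ T) := by
  have hb : (1 : ℝ) ≤ (Fintype.card ι : ℝ) ^ 2 := one_le_pow₀ (mod_cast Fintype.card_pos)
  have hγβ' : γ * μ ≤ β * μ := mul_le_mul_of_nonneg_right (by nlinarith) hμ.le
  have hcover : ℱ i ∩ T ⊆ (ℱ i ∩ trim μ T) ∪ (T \ trim μ T) := fun w hw => by
    simp only [mem_inter, mem_union, mem_sdiff] at hw ⊢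
    tauto
  have hcard : (#(ℱ i ∩ T) : ℝ) ≤ #(ℱ i ∩ trim μ T) + #(T \ trim μ T) := by
    exact_mod_cast (card_le_card hcover).trans (card_union_le _ _)
  linarith [h.le_card_inter i, h.card_sdiff_trim_le hγ hμ, mul_le_mul_of_nonneg_right hγβ hμ.le]

lemma IsQuasirandom.card_trim_mem_Icc [Nonempty τ] (h : IsQuasirandom (24 * β) γ μ ℱ T)
    (hγ : 0 ≤ γ) (hγβ : 6 * (Fintype.card ι : ℝ) ^ 2 * γ ≤ β) (hμ : 0 < μ) :
    (#(trim μ T) : ℝ) ∈ Set.Icc (4 / 5 * μ) (11 / 10 * μ) := by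
  have hb : (1 : ℝ) ≤ (Fintype.card ι : ℝ) ^ 2 := one_le_pow₀ (mod_cast Fintype.card_pos)
  have hγβ' : 6 * γ ≤ β := by nlinarith
  have hβ : β ≤ 1 / 23 := by
    have hsub : (#(ℱ (Classical.arbitrary τ) ∩ T) : ℝ) ≤ #T := by
      exact_mod_cast card_le_card inter_subset_right
    have hdensity : 24 * β - γ ≤ 1 + γ :=
      le_of_mul_le_mul_right ((h.le_card_inter _).trans (hsub.trans h.card_le)) hμ
    linarith
  have hcard : (#(T \ trim μ T) : ℝ) + #(trim μ T) = #T := by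
    exact_mod_cast card_sdiff_add_card_eq_card (filter_subset _ _)
  have hT : (1 - 2 * γ) * μ ≤ #T := by
    simpa using h.le_card_avoid (Classical.arbitrary ι) ∅
  have hβμ : β * μ ≤ 1 / 23 * μ := by gcongr
  have hγμ : γ * μ ≤ 1 / 138 * μ := by gcongr; linarith
  constructor
  · linarith [h.card_sdiff_trim_le hγ hμ, mul_le_mul_of_nonneg_right hγβ hμ.le]
  · linarith [h.card_le, (#(T \ trim μ T)).cast_nonneg (α := ℝ)]

lemma IsQuasirandom.exists_disjoint_subset [Nonempty τ] [Fintype τ]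
    (h : IsQuasirandom (24 * β) γ μ ℱ T) (hγ : 0 ≤ γ)
    (hγβ : 6 * (Fintype.card ι : ℝ) ^ 2 * γ ≤ β) (hμ : 0 < μ) {N : ℕ} (hN : N ≠ 0)
    (hτ : Fintype.card τ * Real.exp (-(5 * β * N)) < 1 / 2) :
    ∃ F ⊆ T, #F ≤ N ∧ (∀ w ∈ F, ∀ w' ∈ F, w ≠ w' → ¬ Meets w w') ∧
      ∀ i, 5 * β * N - 5 * (Fintype.card ι : ℝ) ^ 2 / Fintype.card V * N ^ 2 ≤ #(ℱ i ∩ F) := by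
  have : (0 : ℝ) < Fintype.card ι := mod_cast Fintype.card_pos
  have : (0 : ℝ) < Fintype.card V := mod_cast Fintype.card_pos
  have hβ : 0 ≤ β := le_trans (by positivity) hγβ
  obtain ⟨hlower, hupper⟩ := h.card_trim_mem_Icc hγ hγβ hμ
  have hnonempty : (trim μ T).Nonempty := by
    rw [← card_pos, ← Nat.cast_pos (α := ℝ)]
    linarith
  have hmeets (w) (hw : w ∈ trim μ T) : (#{w' ∈ trim μ T | Meets w w'} : ℝ) ≤
      5 / 2 * (Fintype.card ι : ℝ) ^ 2 / Fintype.card V * #(trim μ T) :=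
    calc _ ≤ (Fintype.card ι : ℝ) ^ 2 * (2 * μ / Fintype.card V) := card_filter_meets_trim_le hw
      _ = 5 / 2 * (Fintype.card ι : ℝ) ^ 2 / Fintype.card V * (4 / 5 * μ) := by ring
      _ ≤ _ := by gcongr
  have hhits (i) : 20 * β * #(trim μ T) ≤ #(ℱ i ∩ trim μ T) :=
    calc _ ≤ 20 * β * (11 / 10 * μ) := by gcongr
      _ = 22 * β * μ := by ring
      _ ≤ _ := h.le_card_inter_trim hγ hγβ hμ i
  have : NeZero N := ⟨hN⟩
  obtain ⟨s, hsT, hconflicts, hs⟩ := exists_few_conflicts_many_hits (ι := Fin N) hnonempty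
    (by positivity) hmeets hhits (by rw [Fintype.card_fin]; convert hτ using 5; ring)
  obtain ⟨F, hFs, hF, hcount⟩ :=
    exists_subset_image_pairwise_not (C := Meets)
      (fun w => ⟨Classical.arbitrary ι, Classical.arbitrary ι, rfl⟩) s
  rw [Fintype.card_fin] at hconflicts hs
  refine ⟨F, fun w hw => ?_, ?_, hF, fun i => ?_⟩
  · obtain ⟨j, -, rfl⟩ := mem_image.1 (hFs hw)
    exact filter_subset _ _ (hsT j)
  · exact (card_le_card hFs).trans (card_image_le.trans_eq (card_fin N))
  · have hcount : (#{j | s j ∈ ℱ i} : ℝ) ≤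
        #(ℱ i ∩ F) + #{q ∈ (univ : Finset (Fin N)).offDiag | Meets (s q.1) (s q.2)} :=
      mod_cast hcount (ℱ i)
    have hconst : 2 * (5 / 2 * (Fintype.card ι : ℝ) ^ 2 / Fintype.card V) * N ^ 2 =
        5 * (Fintype.card ι : ℝ) ^ 2 / Fintype.card V * N ^ 2 := by ring
    linarith [hs i, hconflicts.trans_eq hconst]

end DisjointSelection

/-- There is a set of at most `β * n` pairwise disjoint tuples from `⋃ i, ℱ i`, all satisfying `P`,
that contains at least `β ^ 2 * n / b ^ 2` members of each `ℱ i`. -/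
def HasDisjointSelection {n b : ℕ} {τ : Type*} (β : ℝ) (ℱ : τ → Finset (Fin b → Fin n))
    (P : (Fin b → Fin n) → Prop) : Prop :=
  ∃ F : Finset (Fin b → Fin n),
    (∀ w ∈ F, ∃ i, w ∈ ℱ i) ∧
    (#F : ℝ) ≤ β * n ∧
    (∀ w ∈ F, ∀ w' ∈ F, w ≠ w' → ∀ m m', w m ≠ w' m') ∧
    (∀ i, β ^ 2 * n / (b : ℝ) ^ 2 ≤ #(ℱ i ∩ F)) ∧
    ∀ w ∈ F, P w

theorem IsQuasirandom.hasDisjointSelection {n b : ℕ} {τ : Type*} [Fintype τ] {β γ μ : ℝ}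
    {ℱ : τ → Finset (Fin b → Fin n)} {T : Finset (Fin b → Fin n)}
    (h : IsQuasirandom (24 * β) γ μ ℱ T) (hγ : 0 ≤ γ) (hγβ : 6 * (b : ℝ) ^ 2 * γ ≤ β) (hμ : 0 < μ)
    (hb : b ≠ 0) (hn : n ≠ 0) (hbn : 10 * (b : ℝ) ^ 2 ≤ β * n)
    (hτ : Fintype.card τ * Real.exp (-(5 * β * ⌊β * n / (2 * (b : ℝ) ^ 2)⌋₊)) < 1 / 2) :
    HasDisjointSelection β ℱ (· ∈ T) := by
  have hβ : 0 ≤ β := le_trans (by positivity) hγβ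
  cases isEmpty_or_nonempty τ
  · exact ⟨∅, by simp, by simpa using by positivity, by simp, isEmptyElim, by simp⟩
  have : NeZero b := ⟨hb⟩
  have : NeZero n := ⟨hn⟩
  have : (0 : ℝ) < b := mod_cast hb.bot_lt
  have : (0 : ℝ) < n := mod_cast hn.bot_lt
  set y := β * n / (2 * (b : ℝ) ^ 2) with hy
  have hy5 : 5 ≤ y := (le_div_iff₀ (by positivity)).2 (by linarith)
  have hNy : (⌊y⌋₊ : ℝ) ≤ y := Nat.floor_le (by linarith)
  have hyN : y < ⌊y⌋₊ + 1 := Nat.lt_floor_add_one y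
  obtain ⟨F, hFT, hFN, hdisj, hF⟩ := h.exists_disjoint_subset hγ
    (by rwa [Fintype.card_fin]) hμ (Nat.floor_pos.2 (by linarith)).ne' hτ
  simp only [Fintype.card_fin] at hF
  refine ⟨{w ∈ F | ∃ i, w ∈ ℱ i}, fun w hw => (mem_filter.1 hw).2, ?_, ?_, fun i => ?_,
    fun w hw => hFT (filter_subset _ _ hw)⟩
  · have hb1 : (1 : ℝ) ≤ b ^ 2 := one_le_pow₀ (mod_cast hb.bot_lt)
    calc _ ≤ (#F : ℝ) := mod_cast card_filter_le _ _
      _ ≤ y := (Nat.cast_le.2 hFN).trans hNy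
      _ ≤ _ := div_le_self (by positivity) (by linarith)
  · exact fun w hw w' hw' hne m m' hm =>
      hdisj w (filter_subset _ _ hw) w' (filter_subset _ _ hw') hne ⟨m, m', hm⟩
  · have hinter : ℱ i ∩ {w ∈ F | ∃ i, w ∈ ℱ i} = ℱ i ∩ F := by
      ext w
      simp only [mem_inter, mem_filter]
      exact ⟨fun hw => ⟨hw.1, hw.2.1⟩, fun hw => ⟨hw.1, hw.2, i, hw.1⟩⟩
    rw [hinter]
    calc β ^ 2 * n / b ^ 2 = β * (2 * y) := by rw [hy]; field_simp
      _ ≤ β * (5 / 2 * ⌊y⌋₊) := mul_le_mul_of_nonneg_left (by linarith) hβ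
      _ = 5 * β * ⌊y⌋₊ - 5 * b ^ 2 / n * (⌊y⌋₊ * y) := by rw [hy]; field_simp; ring
      _ ≤ 5 * β * ⌊y⌋₊ - 5 * b ^ 2 / n * ⌊y⌋₊ ^ 2 := by rw [sq (⌊y⌋₊ : ℝ)]; gcongr
      _ ≤ _ := hF i

section Asymptotics

open Filter

lemma mul_le_pow_mul_pow_of_exponent_le {n d ℓ a e C : ℕ} {ε p : ℝ} (hn : 0 < n)
    (hnC : C ^ 3 ≤ n) (hℓ : 2 ≤ ℓ) (hε : 3 * a * ε ≤ ℓ) (hp : (n : ℝ) ^ (-(d : ℝ) - ε) ≤ p)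
    (he : e ∈ Icc 1 a) : (C : ℝ) * n ≤ (n : ℝ) ^ (d * e + ℓ) * p ^ e := by
  have hn0 : (0 : ℝ) < n := mod_cast hn
  have hℓ' : (2 : ℝ) ≤ ℓ := mod_cast hℓ
  obtain ⟨he1, hea⟩ := mem_Icc.1 he
  have : (1 : ℝ) ≤ e := mod_cast he1
  have hea' : (e : ℝ) ≤ a := mod_cast hea
  have hεe : 3 * (ε * e) ≤ ℓ := by
    rcases le_total 0 ε with hε0 | hε0 <;> nlinarith
  have hC : (C : ℝ) ≤ (n : ℝ) ^ (1 / 3 : ℝ) :=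
    (Real.le_rpow_inv_iff_of_pos C.cast_nonneg hn0.le three_pos).2 (mod_cast hnC) |>.trans_eq
      (by norm_num)
  calc (C : ℝ) * n ≤ (n : ℝ) ^ (1 / 3 : ℝ) * (n : ℝ) ^ (1 : ℝ) := by rw [Real.rpow_one]; gcongr
    _ = (n : ℝ) ^ (4 / 3 : ℝ) := by rw [← Real.rpow_add hn0]; norm_num
    _ ≤ (n : ℝ) ^ ((d * e + ℓ : ℕ) + (-(d : ℝ) - ε) * e) :=
        Real.rpow_le_rpow_of_exponent_le (mod_cast hn) (by push_cast; linarith)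
    _ = (n : ℝ) ^ (d * e + ℓ) * ((n : ℝ) ^ (-(d : ℝ) - ε)) ^ e := by
        rw [Real.rpow_add hn0, Real.rpow_natCast, Real.rpow_mul hn0.le, Real.rpow_natCast]
    _ ≤ _ := by gcongr

lemma mul_le_pow_mul_pow_of_mul_rpow_le {n d e C : ℕ} {p : ℝ} (hn : 0 < n) (hC : 1 ≤ C)
    (hp : C * (n : ℝ) ^ (-(d : ℝ)) ≤ p) (he : e ≠ 0) :
    (C : ℝ) * n ≤ (n : ℝ) ^ (d * e + 1) * p ^ e := by
  have hn0 : (0 : ℝ) < n := mod_cast hn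
  calc (C : ℝ) * n ≤ (C : ℝ) ^ e * n := by gcongr; exact le_self_pow₀ (mod_cast hC) he
    _ = (n : ℝ) ^ (d * e + 1) * (C * (n : ℝ) ^ (-(d : ℝ))) ^ e := by
        rw [Real.rpow_neg hn0.le, Real.rpow_natCast, mul_pow, inv_pow, pow_succ, pow_mul]
        field_simp
    _ ≤ _ := by gcongr

lemma tendsto_pow_mul_exp_neg_mul_natCast (s : ℕ) {c : ℝ} (hc : 0 < c) :
    Tendsto (fun n : ℕ => (n : ℝ) ^ s * Real.exp (-c * n)) atTop (nhds 0) := by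
  simpa only [Function.comp_def, Real.rpow_natCast] using
    (tendsto_rpow_mul_exp_neg_mul_atTop_nhds_zero s c hc).comp tendsto_natCast_atTop_atTop

lemma eventually_mul_exp_neg_floor_lt (s : ℕ) {c y δ : ℝ} (hc : 0 < c) (hy : 0 < y) (hδ : 0 < δ) :
    ∀ᶠ n : ℕ in atTop, ∀ t ≤ n ^ s, t * Real.exp (-(c * ⌊y * n⌋₊)) < δ := by
  have hlim := (tendsto_pow_mul_exp_neg_mul_natCast s (mul_pos hc hy)).const_mul (Real.exp c)
  rw [mul_zero] at hlim
  filter_upwards [hlim.eventually_lt_const hδ] with n hn t ht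
  have hfloor : c * (y * n) ≤ c * (⌊y * n⌋₊ + 1) := by gcongr; exact (Nat.lt_floor_add_one _).le
  calc t * Real.exp (-(c * ⌊y * n⌋₊)) ≤ (n : ℝ) ^ s * Real.exp (c + -(c * y) * n) := by
        gcongr
        · exact_mod_cast ht
        · linarith
    _ = Real.exp c * ((n : ℝ) ^ s * Real.exp (-(c * y) * n)) := by rw [Real.exp_add]; ring
    _ < δ := hn

lemma eventually_inv_add_mul_exp_neg_le (b s : ℕ) {δ : ℝ} (hδ : 0 < δ) :
    ∀ᶠ n : ℕ in atTop, ∀ t ≤ n ^ s,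
      1 / (4 * (n : ℝ)) + (t + b * 2 ^ n) * Real.exp (-(4 * n / 2)) ≤ δ := by
  have hlim := ((tendsto_inv_atTop_nhds_zero_nat (𝕜 := ℝ)).const_mul (1 / 4)).add
    ((tendsto_pow_mul_exp_neg_mul_natCast s two_pos).add
      ((tendsto_pow_mul_exp_neg_mul_natCast 0 one_pos).const_mul (b : ℝ)))
  simp only [mul_zero, add_zero, pow_zero, one_mul] at hlim
  filter_upwards [hlim.eventually_le_const hδ] with n hn t ht
  have htwo : (2 : ℝ) ^ n * Real.exp (-2 * n) ≤ Real.exp (-1 * n) :=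
    calc _ ≤ Real.exp 1 ^ n * Real.exp (-2 * n) := by
          gcongr; linarith [Real.add_one_le_exp 1]
      _ = _ := by rw [← Real.exp_nat_mul, ← Real.exp_add]; ring_nf
  calc _ = 1 / 4 * (n : ℝ)⁻¹ +
          (t * Real.exp (-2 * n) + b * (2 ^ n * Real.exp (-2 * n))) := by
        rw [show -(4 * (n : ℝ) / 2) = -2 * n by ring]; ring
    _ ≤ 1 / 4 * (n : ℝ)⁻¹ + ((n : ℝ) ^ s * Real.exp (-2 * n) + b * Real.exp (-1 * n)) := by
        gcongr
        exact_mod_cast ht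
    _ ≤ δ := hn

end Asymptotics

section Selection

variable {k ℓ a x b n : ℕ} {β ε p : ℝ}

lemma mul_le_pow_mul_pow_of_density_le {C : ℕ} (hℓ : 1 ≤ ℓ) (hlk : ℓ < k) (hε : 3 * a * ε ≤ ℓ)
    (hn : 0 < n) (hC : 1 ≤ C) (hnC : C ^ 3 ≤ n)
    (hp : (2 ≤ ℓ → (n : ℝ) ^ (-((k : ℝ) - ℓ) - ε) ≤ p) ∧
      (ℓ = 1 → C * (n : ℝ) ^ (-((k : ℝ) - 1)) ≤ p)) :
    0 < p ∧ ∀ e ∈ Icc 1 a, (C : ℝ) * n ≤ (n : ℝ) ^ ((k - ℓ) * e + ℓ) * p ^ e := by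
  have : (0 : ℝ) < n := mod_cast hn
  have : (0 : ℝ) < C := mod_cast hC
  rcases hℓ.eq_or_lt with rfl | hℓ
  · have hp1 := hp.2 rfl
    refine ⟨lt_of_lt_of_le (by positivity) hp1, fun e he => ?_⟩
    refine mul_le_pow_mul_pow_of_mul_rpow_le hn hC ?_ (Nat.one_le_iff_ne_zero.1 (mem_Icc.1 he).1)
    rwa [Nat.cast_sub hlk.le, Nat.cast_one]
  · have hp2 := hp.1 hℓ
    refine ⟨lt_of_lt_of_le (by positivity) hp2, fun e he => ?_⟩
    refine mul_le_pow_mul_pow_of_exponent_le hn hnC hℓ hε ?_ he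
    rwa [Nat.cast_sub hlk.le]

lemma le_gProb_hasDisjointSelection {τ : Type*} [Fintype τ] {ℱ : τ → Finset (Fin b → Fin n)}
    (hlk : ℓ < k) (hb : x + ℓ + (k - ℓ) * a ≤ b) (hb0 : b ≠ 0) (hβ : 0 < β) (hp : p ∈ Set.Ioc 0 1)
    (hn : n ≠ 0)
    (hL : ∀ e ∈ Icc 1 a, 2 ^ a * b ^ b / (β / (6 * b ^ 2)) ^ 2 * (4 * n) ≤
      (n : ℝ) ^ ((k - ℓ) * e + ℓ) * p ^ e)
    (hbn : 10 * (b : ℝ) ^ 2 ≤ β * n) (hbn' : (b : ℝ) ^ 2 ≤ β / (6 * b ^ 2) * n)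
    (hτ : Fintype.card τ * Real.exp (-(5 * β * ⌊β * n / (2 * (b : ℝ) ^ 2)⌋₊)) < 1 / 2)
    (hinj : ∀ i, ∀ w ∈ ℱ i, Function.Injective w)
    (hcard : ∀ i, 24 * β * (n : ℝ) ^ b ≤ #(ℱ i)) :
    1 - (1 / (4 * n) + (Fintype.card τ + b * 2 ^ n) * Real.exp (-(4 * n / 2))) ≤
      gProb n k p fun E => HasDisjointSelection β ℱ fun w => SpansPax k ℓ a x E w := by
  have : (0 : ℝ) < b := mod_cast hb0.bot_lt
  have hn' : (0 : ℝ) < n := mod_cast hn.bot_lt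
  have hγ : 0 < β / (6 * (b : ℝ) ^ 2) := by positivity
  refine (le_gProb_isQuasirandom_paxCopies hlk hb hp hn.bot_lt hγ (by positivity) hL hbn' hinj
    hcard).trans ?_
  rw [gProb_eq_prob, gProb_eq_prob]
  refine RandomSubset.prob_mono (Set.Ioc_subset_Icc_self hp) fun E hE => ?_
  simpa only [mem_paxCopies] using hE.hasDisjointSelection hγ.le
    (mul_div_cancel₀ β (by positivity)).le (mul_pos (pow_pos hn' b) (pow_pos hp.1 a)) hb0 hn hbn hτ

theorem disjoint_pax_selection_general (s : ℕ) (hℓ : 1 ≤ ℓ) (hlk : ℓ < k)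
    (hb : x + ℓ + (k - ℓ) * a ≤ b) (hε : 3 * a * ε ≤ ℓ) (hβ : 0 < β) :
    ∃ C₀ : ℕ, ∀ C : ℕ, C₀ ≤ C → ∀ δ : ℝ, 0 < δ → ∃ n₀ : ℕ, ∀ n : ℕ, n₀ ≤ n →
      ∀ t : ℕ, t ≤ n ^ s → ∀ ℱ : Fin t → Finset (Fin b → Fin n),
        (∀ i, (∀ w ∈ ℱ i, Function.Injective w) ∧ 24 * β * (n : ℝ) ^ b ≤ #(ℱ i)) →
      ∀ p : ℝ, p ≤ 1 →
        ((2 ≤ ℓ → (n : ℝ) ^ (-((k : ℝ) - ℓ) - ε) ≤ p) ∧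
          (ℓ = 1 → C * (n : ℝ) ^ (-((k : ℝ) - 1)) ≤ p)) →
        1 - δ ≤ gProb n k p fun E =>
          HasDisjointSelection β ℱ fun w => SpansPax k ℓ a x E w := by
  have hb0 : b ≠ 0 := by omega
  have : (0 : ℝ) < b := mod_cast hb0.bot_lt
  set K : ℝ := 2 ^ a * b ^ b / (β / (6 * b ^ 2)) ^ 2
  refine ⟨max 1 ⌈4 * K⌉₊, fun C hC δ hδ => ?_⟩
  obtain ⟨hC1, hCK⟩ := max_le_iff.1 hC
  replace hCK : 4 * K ≤ C := Nat.ceil_le.1 hCK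
  have hlinear {c : ℝ} (hc : 0 < c) (r : ℝ) : ∀ᶠ n : ℕ in Filter.atTop, r ≤ c * n :=
    (tendsto_natCast_atTop_atTop.const_mul_atTop hc).eventually_ge_atTop r
  refine Filter.eventually_atTop.1 ?_
  filter_upwards [Filter.eventually_gt_atTop 0, Filter.eventually_ge_atTop (C ^ 3),
    hlinear hβ (10 * (b : ℝ) ^ 2), hlinear (c := β / (6 * b ^ 2)) (by positivity) ((b : ℝ) ^ 2),
    eventually_mul_exp_neg_floor_lt s (c := 5 * β) (y := β / (2 * b ^ 2)) (by positivity)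
      (by positivity) one_half_pos,
    eventually_inv_add_mul_exp_neg_le b s hδ]
    with n hn hnC hbn hbn' hτ hδn t ht ℱ hℱ p hp1 hp
  obtain ⟨hp0, hL⟩ := mul_le_pow_mul_pow_of_density_le hℓ hlk hε hn hC1 hnC hp
  have hmain := le_gProb_hasDisjointSelection hlk hb hb0 hβ ⟨hp0, hp1⟩ hn.ne'
    (fun e he => le_trans (by nlinarith [n.cast_nonneg (α := ℝ)]) (hL e he)) hbn hbn'
    (by simpa only [Fintype.card_fin, div_mul_eq_mul_div] using hτ t ht)
    (fun i => (hℱ i).1) fun i => (hℱ i).2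
  rw [Fintype.card_fin] at hmain
  exact (sub_le_sub_left (hδn t ht) 1).trans hmain

end Selection

/-- Lemma 3.2. Given at most `n^{2k}` families of `24β n^b` ordered
`b`-subsets each, a.a.s. there is a family `ℱ ⊆ ⋃ᵢ ℱᵢ` of at most `βn` pairwise disjoint
ordered `b`-sets, each spanning a labeled copy of `P_{a,x}` in `G`, with
`|ℱᵢ ∩ ℱ| ≥ β²n/b²` for every `i`. -/
theorem disjoint_pax_selection
    (k ℓ a x : ℕ) (hk : 3 ≤ k) (hl1 : 1 ≤ ℓ) (hlk : ℓ ≤ k - 1)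
    (ha : 1 ≤ a) (hx : x ≤ k)
    (ε : ℝ) (hε0 : 0 < ε) (hε : ε ≤ (ℓ : ℝ) / (3 * (a : ℝ)))
    (β : ℝ) (hβ0 : 0 < β) :
    ∃ C₀ : ℕ, ∀ C : ℕ, C₀ ≤ C →
      ∀ δ : ℝ, 0 < δ → ∃ n₀ : ℕ, ∀ n : ℕ, n₀ ≤ n →
        ∀ t : ℕ, t ≤ n ^ (2 * k) →
        ∀ ℱ : Fin t → Finset (Fin (2 * x + ℓ + (k - ℓ) * a) → Fin n),
          (∀ i, (∀ w ∈ ℱ i, Function.Injective w) ∧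
            ((ℱ i).card : ℝ) = 24 * β * (n : ℝ) ^ (2 * x + ℓ + (k - ℓ) * a)) →
        ∀ p : ℝ, 0 ≤ p → p ≤ 1 →
          ((2 ≤ ℓ → (n : ℝ) ^ (-((k : ℝ) - (ℓ : ℝ)) - ε) ≤ p) ∧
           (ℓ = 1 → (C : ℝ) * (n : ℝ) ^ (-((k : ℝ) - 1)) ≤ p)) →
          1 - δ ≤ gProb n k p (fun E =>
            ∃ F : Finset (Fin (2 * x + ℓ + (k - ℓ) * a) → Fin n),
              (∀ w ∈ F, ∃ i, w ∈ ℱ i) ∧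
              (F.card : ℝ) ≤ β * (n : ℝ) ∧
              (∀ w ∈ F, ∀ w' ∈ F, w ≠ w' → ∀ m m', w m ≠ w' m') ∧
              (∀ i, β ^ 2 * (n : ℝ) / ((2 * x + ℓ + (k - ℓ) * a : ℕ) : ℝ) ^ 2 ≤
                ((ℱ i ∩ F).card : ℝ)) ∧
              (∀ w ∈ F, SpansPax k ℓ a x E w)) := by
  have hε' : 3 * a * ε ≤ ℓ := (le_div_iff₀' (mul_pos three_pos (mod_cast ha))).1 hε
  obtain ⟨C₀, hC₀⟩ := disjoint_pax_selection_general (x := x) (2 * k) hl1 (by omega)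
    (by omega : x + ℓ + (k - ℓ) * a ≤ 2 * x + ℓ + (k - ℓ) * a) hε' hβ0
  refine ⟨C₀, fun C hC δ hδ => (hC₀ C hC δ hδ).imp fun n₀ hn₀ n hn t ht ℱ hℱ p _ => ?_⟩
  exact hn₀ n hn t ht ℱ (fun i => ⟨(hℱ i).1, (hℱ i).2.ge⟩) p
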